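/- For every ε > 0 there exist positive constants δ and C such that if C n^{-1/2} ≤ p(n) ≤ n^{-1/3}, then G(n,p) asymptotically almost surely satisfies the following: every subgraph G' of G(n,p) with more than (1/2 + ε)·e(G(n,p)) edges satisfies the property P_δ, i.e., for every labeling of the vertices of G' with ℤ_n and every integer l with 0 ≤ l ≤ δn, G' contains an l-shortcut. -/

import Mathlib

/-!
The constant `C = 1` works, with `δ = 1 / N` for some `N` of order `1 / min ε 1`.

*Deterministic core* (`exists_excess`). Let `f` be a nonnegative weight on pairs of points of the
circle, with average above `1/2`, no rectangle much denser than average `1`, and a bounded second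
moment of codegrees. A linear number of points `x` in a short arc have row averages at `x` and
`x + 1` above constants `a`, `b` with `a + b > 1` (`exists_class`). Cut this class into an initial
part, for `i₁`, and a final part, for `i₂`. Since `a + b > 1`, the rows of `i₁` and `i₂ + 1` overlap
on average, and the second moment spreads the overlap, so that many `i₂` have linearly many partners
`i₁`, that is, there is an `i₃` with `{i₁, i₃}` and `{i₂ + 1, i₃ + 1}` in the support of `f`
(`exists_rows_with_partners`). The rows of `i₁ + 1` for these partners reach almost `b n` points
`i₄` (`exists_endpoints`), because no rectangle is too dense. Hence for such an `i₂` at most about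
`(1 - b) n` of the pairs `(i₂, i₄ + l + 1)` fail to complete an `l`-shortcut, while the row of `i₂`
has weight at least `a n`. So some rectangle carries a weight exceeding, by a constant times `n²`,
the number of its pairs that complete no shortcut.

*Transfer to sparse random graphs.* Given a subgraph `G'` with more than `1/2 + ε` of the edges of
`G(n,p)`, choose a sparse sample `S` of its edges that still represents all its rectangle counts
(`exists_sample`), and apply the core to the indicator of `S`, scaled. If `G'` has no `l`-shortcut
for some labeling, then all edges of `G'` in the rectangle found lie in the set `openPairs S` of
pairs completing no shortcut with three edges of `S`, and therefore `G(n,p)` has too many edges in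
that set (`satisfiesPdelta_of_good`). As `openPairs` is determined by `S`, the labeling, `l` and a
rectangle, a union bound over these data and the Chernoff bound show that a.a.s. this never happens
(`bernProb_exists_sample_le`): a set `S` of at most `η p n²` edges is present with probability
`p ^ |S|`, the resulting entropy `η log (1 / η) p n²` is small against the Chernoff exponent, and
the `n! (n + 1) 4 ^ n` remaining choices are negligible against `exp (-c p n²)` since
`p n² ≥ n ^ (3/2)`. The condition `n p² ≥ 1` bounds the expected number of four-cycles by
`O(p⁴ n⁴)`, which gives the second moment bound through Markov's inequality
(`bernProb_fourCount_le`). It holds only with probability `1 - O(1 / K)`, so it matters that neither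
the excess nor the sample rate `η` depends on `K`.
-/

open Filter Topology Classical

/-- The clockwise arc length from `a` to `b` on the discrete circle `ZMod n`. -/
def arcDist {n : ℕ} (a b : ZMod n) : ℕ := (b - a).val

/-- The points of `L` are all distinct and lie in this clockwise cyclic order
on the discrete circle `ZMod n` (the consecutive clockwise arcs, including the
wrap-around arc, sum to exactly `n`). -/
def InClockwiseOrder {n : ℕ} (L : List (ZMod n)) : Prop :=
  L.Nodup ∧ ((L.zip (L.rotate 1)).map fun q => arcDist q.1 q.2).sum = n

/-- The Hamilton cycle `C_n` on vertex set `ZMod n`, with edges `{i, i+1}`. -/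
def cycleGraph (n : ℕ) : SimpleGraph (ZMod n) :=
  SimpleGraph.fromEdgeSet {e | ∃ i : ZMod n, e = s(i, i + 1)}

/-- The four edges of the `l`-shortcut determined by `i₁ i₂ i₃ i₄`. -/
def shortcutEdges {n : ℕ} (l : ℕ) (i₁ i₂ i₃ i₄ : ZMod n) : Finset (Sym2 (ZMod n)) :=
  {s(i₁, i₃), s(i₁ + 1, i₄), s(i₂, i₄ + (l : ZMod n) + 1), s(i₂ + 1, i₃ + 1)}

/-- `(i₁, i₂, i₃, i₄)` determines an `l`-shortcut (of type (i) or type (ii)) in `K_n ∖ C_n`. -/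
def IsShortcutTuple {n : ℕ} (l : ℕ) (i₁ i₂ i₃ i₄ : ZMod n) : Prop :=
  (InClockwiseOrder [i₁, i₁ + 1, i₂, i₂ + 1, i₃, i₃ + 1, i₄, i₄ + (l : ZMod n) + 1] ∨
   InClockwiseOrder [i₁, i₁ + 1, i₂, i₂ + 1, i₄, i₄ + (l : ZMod n) + 1, i₃, i₃ + 1]) ∧
  ∀ e ∈ shortcutEdges l i₁ i₂ i₃ i₄, e ∉ (cycleGraph n).edgeSet

/-- The edge set `S` is an `l`-shortcut. -/
def IsShortcut {n : ℕ} (l : ℕ) (S : Finset (Sym2 (ZMod n))) : Prop :=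
  ∃ i₁ i₂ i₃ i₄ : ZMod n, IsShortcutTuple l i₁ i₂ i₃ i₄ ∧ S = shortcutEdges l i₁ i₂ i₃ i₄

/-- The number of `l`-shortcuts all of whose edges belong to the edge set `U`. -/
noncomputable def shortcutCountIn {n : ℕ} (l : ℕ) (U : Set (Sym2 (ZMod n))) : ℕ :=
  {S : Finset (Sym2 (ZMod n)) | IsShortcut l S ∧ (S : Set (Sym2 (ZMod n))) ⊆ U}.ncard

/-- `G` contains an `l`-shortcut. -/
def ContainsShortcut {n : ℕ} (l : ℕ) (G : SimpleGraph (ZMod n)) : Prop :=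
  ∃ i₁ i₂ i₃ i₄ : ZMod n, IsShortcutTuple l i₁ i₂ i₃ i₄ ∧
    (shortcutEdges l i₁ i₂ i₃ i₄ : Set (Sym2 (ZMod n))) ⊆ G.edgeSet

/-- `G` contains a cycle of length `t`. -/
def HasCycleLength {V : Type} (G : SimpleGraph V) (t : ℕ) : Prop :=
  ∃ (v : V) (w : G.Walk v v), w.IsCycle ∧ w.length = t

/-- Probability that a graph drawn from the binomial random graph `G(n,p)` on the labeled
vertex set `ZMod n` satisfies the predicate `P` (junk value `0` for `n = 0`). -/
noncomputable def gnpProbZMod (n : ℕ) (p : ℝ) (P : SimpleGraph (ZMod n) → Prop) : ℝ :=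
  if h : n = 0 then 0 else
    letI : NeZero n := ⟨h⟩
    ∑ G : SimpleGraph (ZMod n),
      if P G then p ^ G.edgeSet.ncard * (1 - p) ^ (n.choose 2 - G.edgeSet.ncard) else 0

/-- The property `P_δ`: for every labeling of the vertices with `ZMod n` (i.e. every
relabeling bijection) and every `l` with `0 ≤ l ≤ δn`, the graph contains an `l`-shortcut. -/
def SatisfiesPdelta {n : ℕ} (δ : ℝ) (G : SimpleGraph (ZMod n)) : Prop :=
  ∀ σ : ZMod n ≃ ZMod n, ∀ l : ℕ, (l : ℝ) ≤ δ * n →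
    ContainsShortcut l (G.map σ.toEmbedding)


/-! ### Clockwise order in coordinates -/

section Order

variable {n : ℕ}

lemma coord_sub {s : ZMod n} {a b : ℕ} (hab : a ≤ b) :
    (s + (b : ZMod n)) - (s + (a : ZMod n)) = ((b - a : ℕ) : ZMod n) := by
  rw [Nat.cast_sub hab]; ring

lemma arcDist_coord {s : ZMod n} {a b : ℕ} (hab : a ≤ b) (hb : b < n) :
    arcDist (s + (a : ZMod n)) (s + (b : ZMod n)) = b - a := by
  unfold arcDist
  rw [coord_sub hab, ZMod.val_cast_of_lt (by omega)]

lemma arcDist_coord_wrap {s : ZMod n} {a b : ℕ} (hab : a < b) (hb : b < n) :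
    arcDist (s + (b : ZMod n)) (s + (a : ZMod n)) = n - (b - a) := by
  unfold arcDist
  have : (s + (a : ZMod n)) - (s + (b : ZMod n)) = ((n - (b - a) : ℕ) : ZMod n) := by
    rw [Nat.cast_sub (by omega), Nat.cast_sub hab.le, ZMod.natCast_self]; ring
  rw [this, ZMod.val_cast_of_lt (by omega)]

lemma coord_inj {s : ZMod n} {a b : ℕ} (ha : a < n) (hb : b < n) :
    s + (a : ZMod n) = s + (b : ZMod n) ↔ a = b := by
  constructor
  · intro h
    have h' : (a : ZMod n) = (b : ZMod n) := add_left_cancel h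
    have := congrArg ZMod.val h'
    rwa [ZMod.val_cast_of_lt ha, ZMod.val_cast_of_lt hb] at this
  · rintro rfl; rfl

/-- Points with increasing coordinates, measured clockwise from a base point `s`, are in
clockwise order. -/
lemma inClockwiseOrder_of_coord (s : ZMod n) {c₁ c₂ c₃ c₄ c₅ c₆ c₇ c₈ : ℕ}
    (h₁ : c₁ < c₂) (h₂ : c₂ < c₃) (h₃ : c₃ < c₄) (h₄ : c₄ < c₅) (h₅ : c₅ < c₆) (h₆ : c₆ < c₇)
    (h₇ : c₇ < c₈) (h₈ : c₈ < n) :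
    InClockwiseOrder [s + (c₁ : ZMod n), s + (c₂ : ZMod n), s + (c₃ : ZMod n), s + (c₄ : ZMod n),
      s + (c₅ : ZMod n), s + (c₆ : ZMod n), s + (c₇ : ZMod n), s + (c₈ : ZMod n)] := by
  constructor
  · have hnd : ([c₁, c₂, c₃, c₄, c₅, c₆, c₇, c₈] : List ℕ).Nodup := by
      simp only [List.nodup_cons, List.mem_cons, List.not_mem_nil, List.nodup_nil, or_false,
        not_or, not_false_eq_true, and_true]
      omega
    have := List.Nodup.map_on (f := fun c : ℕ => s + (c : ZMod n)) (l := [c₁, c₂, c₃, c₄, c₅, c₆, c₇, c₈])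
      (by
        intro x hx y hy hxy
        have hx' : x < n := by simp at hx; omega
        have hy' : y < n := by simp at hy; omega
        exact (coord_inj hx' hy').1 hxy) hnd
    simpa using this
  · have hr : ([s + (c₁ : ZMod n), s + (c₂ : ZMod n), s + (c₃ : ZMod n), s + (c₄ : ZMod n),
      s + (c₅ : ZMod n), s + (c₆ : ZMod n), s + (c₇ : ZMod n), s + (c₈ : ZMod n)]).rotate 1 =
      [s + (c₂ : ZMod n), s + (c₃ : ZMod n), s + (c₄ : ZMod n),
      s + (c₅ : ZMod n), s + (c₆ : ZMod n), s + (c₇ : ZMod n), s + (c₈ : ZMod n),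
      s + (c₁ : ZMod n)] := by
      simp [List.rotate_cons_succ]
    rw [hr]
    simp only [List.zip_cons_cons, List.map_cons, List.zip_nil_right, List.map_nil, List.sum_cons,
      List.sum_nil]
    rw [arcDist_coord h₁.le (by omega), arcDist_coord h₂.le (by omega),
      arcDist_coord h₃.le (by omega), arcDist_coord h₄.le (by omega),
      arcDist_coord h₅.le (by omega), arcDist_coord h₆.le (by omega),
      arcDist_coord h₇.le (by omega), arcDist_coord_wrap (by omega) h₈]
    omega

lemma not_mem_cycleGraph_of_coord [NeZero n] (s : ZMod n) {a b : ℕ} (h : a + 2 ≤ b) (hb : b < n)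
    (h' : b + 1 < n + a) :
    s(s + (a : ZMod n), s + (b : ZMod n)) ∉ (cycleGraph n).edgeSet := by
  intro hmem
  unfold cycleGraph at hmem
  rw [SimpleGraph.edgeSet_fromEdgeSet] at hmem
  obtain ⟨i, hi⟩ := hmem.1
  rw [Sym2.eq_iff] at hi
  have e1 : ((1 : ℕ) : ZMod n) = 1 := by simp
  rcases hi with ⟨h1, h2⟩ | ⟨h1, h2⟩
  · have : s + (b : ZMod n) = s + ((a + 1 : ℕ) : ZMod n) := by
      rw [h2, ← h1]; push_cast; ring
    have := (coord_inj hb (by omega)).1 this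
    omega
  · have : ((b - a : ℕ) : ZMod n) = ((n - 1 : ℕ) : ZMod n) := by
      rw [← coord_sub (s := s) (by omega : a ≤ b), h1, h2,
        Nat.cast_sub (NeZero.one_le), ZMod.natCast_self]
      push_cast; ring
    have := congrArg ZMod.val this
    rw [ZMod.val_cast_of_lt (by omega), ZMod.val_cast_of_lt (by omega)] at this
    omega

/-- Four indices give an `l`-shortcut as soon as their coordinates from some base point satisfy
the order conditions of type (i) or of type (ii); the edges then avoid `C_n` automatically. -/
lemma isShortcutTuple_of_coord [NeZero n] (s : ZMod n) (l j₁ j₂ j₃ j₄ : ℕ) (h₁ : j₁ + 2 ≤ j₂)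
    (h₂ : j₂ + 2 ≤ j₃) (h₃ : j₂ + 2 ≤ j₄) (h₄ : j₃ + 1 < n) (h₅ : j₄ + l + 1 < n)
    (h₆ : j₃ + 1 < j₄ ∨ j₄ + l + 1 < j₃) :
    IsShortcutTuple l (s + (j₁ : ZMod n)) (s + (j₂ : ZMod n)) (s + (j₃ : ZMod n))
      (s + (j₄ : ZMod n)) := by
  have a1 : ∀ j : ℕ, s + (j : ZMod n) + 1 = s + ((j + 1 : ℕ) : ZMod n) := by
    intro j; push_cast; ring
  have a2 : s + (j₄ : ZMod n) + (l : ZMod n) + 1 = s + ((j₄ + l + 1 : ℕ) : ZMod n) := by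
    push_cast; ring
  constructor
  · rcases h₆ with h | h
    · left
      rw [a2, a1, a1, a1]
      apply inClockwiseOrder_of_coord <;> omega
    · right
      rw [a2, a1, a1, a1]
      apply inClockwiseOrder_of_coord <;> omega
  · intro e he
    simp only [shortcutEdges, Finset.mem_insert, Finset.mem_singleton] at he
    rw [a2, a1, a1, a1] at he
    rcases he with rfl | rfl | rfl | rfl <;> apply not_mem_cycleGraph_of_coord <;> omega

end Order

/-! ### Truncated products and the choice of a class of rows -/

section Deterministic

/-- If `u` and `v` have average at most about `1` on every large set and the sum of their averages
over `J` exceeds `1`, then `u * v` has a positive average over the part of `J` where `u ≤ 2`.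
This is the sparse form of `|N ∩ N'| ≥ |N| + |N'| - n`. -/
lemma sum_mul_ge_of_sum_add {V : Type*} (u v : V → ℝ) (J : Finset V) (ζ s : ℝ)
    (hu : ∀ y, 0 ≤ u y) (hv : ∀ y, 0 ≤ v y)
    (hU : ∀ Y : Finset V, ∑ y ∈ Y, u y ≤ (Y.card : ℝ) + ζ)
    (hV : ∀ Y : Finset V, ∑ y ∈ Y, v y ≤ (Y.card : ℝ) + ζ)
    (h : (J.card : ℝ) + s ≤ ∑ y ∈ J, u y + ∑ y ∈ J, v y) :
    s - 3 * ζ ≤ ∑ y ∈ J with u y ≤ 2, u y * v y := by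
  have key : ∀ (w : V → ℝ), (∀ Y : Finset V, ∑ y ∈ Y, w y ≤ (Y.card : ℝ) + ζ) → ∀ c : ℝ,
      ∑ y ∈ J, (if c < w y then w y - 1 else 0) ≤ ζ := by
    intro w hw c
    rw [← Finset.sum_filter, Finset.sum_sub_distrib]
    have := hw (J.filter fun y => c < w y)
    simp only [Finset.sum_const, nsmul_eq_mul, mul_one]
    linarith
  have k1 := key u hU 1
  have k2 := key v hV 1
  have k3 := key u hU 2
  have hpt : ∀ y ∈ J, u y + v y - 1 - (if 1 < u y then u y - 1 else 0)
      - (if 1 < v y then v y - 1 else 0) - (if 2 < u y then u y - 1 else 0)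
      ≤ if u y ≤ 2 then u y * v y else 0 := by
    intro y _
    have := hu y
    have := hv y
    split_ifs <;> nlinarith
  have := Finset.sum_le_sum hpt
  rw [← Finset.sum_filter] at this
  simp only [Finset.sum_sub_distrib, Finset.sum_add_distrib, Finset.sum_const, nsmul_eq_mul,
    mul_one] at this
  linarith

/-- Total weight of `f` on the rectangle `A × B`. -/
noncomputable def rectWeight {V : Type*} (f : V → V → ℝ) (A B : Finset V) : ℝ :=
  ∑ x ∈ A, ∑ y ∈ B, f x y

/-- Clockwise coordinate of `x` from the base point `s`. -/
def coordFrom {n : ℕ} (s x : ZMod n) : ℕ := (x - s).val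

variable {n : ℕ} [NeZero n]

lemma coordFrom_lt (s x : ZMod n) : coordFrom s x < n := ZMod.val_lt _

lemma add_coordFrom (s x : ZMod n) : s + (coordFrom s x : ZMod n) = x := by
  unfold coordFrom
  rw [ZMod.natCast_zmod_val]; ring

lemma coordFrom_injective (s : ZMod n) : Function.Injective (coordFrom s) := by
  intro x y h
  rw [← add_coordFrom s x, ← add_coordFrom s y, h]

lemma card_coord_le (s : ZMod n) (a b : ℕ) :
    (Finset.univ.filter fun x : ZMod n => a ≤ coordFrom s x ∧ coordFrom s x < b).card ≤ b - a := by
  rw [← Nat.card_Ico]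
  apply Finset.card_le_card_of_injOn (coordFrom s)
  · intro x hx
    simpa using hx
  · exact (coordFrom_injective s).injOn

/-- If `f` has average above `1/2`, then a positive proportion of indices `x` in a short arc have
row averages at `x` and `x + 1` bounded below by common constants `a`, `b` with `a + b > 1`. -/
lemma exists_class (f : ZMod n → ZMod n → ℝ) (ε τ : ℝ) (L N : ℕ) (hε : 0 < ε) (hε1 : ε ≤ 1)
    (hτ : τ ≤ ε / 4) (hL : 8 / ε ≤ L) (hN : 0 < N) (hNn : n / N + 1 ≤ n)
    (hf : ∀ x y, 0 ≤ f x y)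
    (H : ∀ A B : Finset (ZMod n), rectWeight f A B ≤ A.card * B.card + τ * (n : ℝ) ^ 2)
    (htot : (1 / 2 + ε) * (n : ℝ) ^ 2 ≤ rectWeight f Finset.univ Finset.univ) :
    ∃ (a b : ℝ) (s : ZMod n) (A : Finset (ZMod n)), 1 + ε / 2 ≤ a + b ∧
      ε / 4 * n / ((L + 1) ^ 2 * N) ≤ A.card ∧
      ∀ x ∈ A, a * n ≤ ∑ y, f x y ∧ b * n ≤ ∑ y, f (x + 1) y ∧ coordFrom s x < n / N + 1 := by
  have hn : (0 : ℝ) < n := by exact_mod_cast Nat.pos_of_ne_zero (NeZero.ne n)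
  set D : ZMod n → ℝ := fun x => (∑ y, f x y) / n with hD
  have hD0 : ∀ x, 0 ≤ D x := fun x => div_nonneg (Finset.sum_nonneg fun y _ => hf x y) hn.le
  have hsumD : ∀ X : Finset (ZMod n), ∑ x ∈ X, D x ≤ X.card + τ * n := by
    intro X
    have := H X Finset.univ
    rw [rectWeight] at this
    simp only [hD]
    rw [← Finset.sum_div, div_le_iff₀ hn]
    simp only [Finset.card_univ, ZMod.card] at this
    nlinarith
  have htotD : (1 / 2 + ε) * n ≤ ∑ x, D x := by
    simp only [hD]
    rw [← Finset.sum_div, le_div_iff₀ hn]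
    rw [rectWeight] at htot
    nlinarith
  have hshift : ∑ x, D (x + 1) = ∑ x, D x :=
    Equiv.sum_comp (Equiv.addRight (1 : ZMod n)) D
  set X : Finset (ZMod n) := Finset.univ.filter fun x => 1 + ε ≤ D x + D (x + 1) with hX
  have hXcard : ε / 4 * n ≤ X.card := by
    have h1 : ∑ x, (D x + D (x + 1)) ≤ (1 + ε) * n + ∑ x ∈ X, (D x + D (x + 1)) := by
      rw [← Finset.sum_filter_add_sum_filter_not Finset.univ (fun x => 1 + ε ≤ D x + D (x + 1)),
        add_comm]
      gcongr
      calc _ ≤ ∑ x ∈ Finset.univ.filter (fun x => ¬ (1 + ε ≤ D x + D (x + 1))), (1 + ε) := by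
            apply Finset.sum_le_sum
            intro x hx
            simp at hx
            exact hx.le
        _ ≤ ∑ x : ZMod n, (1 + ε) := by
            apply Finset.sum_le_sum_of_subset_of_nonneg (Finset.subset_univ _)
            intros; linarith
        _ = (1 + ε) * n := by simp [ZMod.card]; ring
    rw [Finset.sum_add_distrib, hshift, Finset.sum_add_distrib] at h1
    have h2 := hsumD X
    have h3 : ∑ x ∈ X, D (x + 1) ≤ X.card + τ * n := by
      have := hsumD (X.map (Equiv.addRight (1 : ZMod n)).toEmbedding)
      simpa using this
    nlinarith
  -- the colour of `x` records its two row averages, rounded and capped, and the arc it lies in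
  set κ : ℝ := ε / 4 with hκ
  have hκ0 : 0 < κ := by positivity
  set cell : ℝ → ℕ := fun d => min ⌊d / κ⌋₊ L with hcell
  have hcell_le : ∀ d : ℝ, 0 ≤ d → κ * cell d ≤ d := by
    intro d hd
    have h1 : (cell d : ℝ) ≤ d / κ :=
      le_trans (by exact_mod_cast min_le_left _ _) (Nat.floor_le (by positivity))
    rw [le_div_iff₀ hκ0] at h1
    linarith
  have hκL : 2 ≤ κ * L := by
    rw [div_le_iff₀ hε] at hL
    rw [hκ]; linarith
  have hcell_ge : ∀ d : ℝ, 0 ≤ d → d - κ ≤ κ * cell d ∨ 2 ≤ κ * cell d := by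
    intro d hd
    simp only [hcell]
    rcases le_total ⌊d / κ⌋₊ L with h | h
    · left
      rw [min_eq_left h]
      have := Nat.lt_floor_add_one (d / κ)
      rw [div_lt_iff₀ hκ0] at this
      linarith
    · right
      rw [min_eq_right h]; exact hκL
  set m := n / N + 1 with hm
  let col : ZMod n → ℕ × ℕ × ℕ := fun x => (cell (D x), cell (D (x + 1)), x.val / m)
  have hmaps : ∀ x ∈ X, col x ∈ (Finset.range (L + 1)) ×ˢ ((Finset.range (L + 1)) ×ˢ
      (Finset.range N)) := by
    intro x _
    simp only [col, Finset.mem_product, Finset.mem_range, hcell]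
    refine ⟨by omega, by omega, ?_⟩
    rw [Nat.div_lt_iff_lt_mul (Nat.succ_pos _)]
    have h1 : x.val < n := ZMod.val_lt x
    have h2 := Nat.lt_div_mul_add (a := n) hN
    calc x.val < n / N * N + N := by omega
      _ = N * m := by rw [hm]; ring
  have hne : ((Finset.range (L + 1)) ×ˢ ((Finset.range (L + 1)) ×ˢ (Finset.range N))).Nonempty :=
    ⟨(0, 0, 0), by simp [hN]⟩
  obtain ⟨⟨k₁, k₂, k₃⟩, hk, hcard⟩ := Finset.exists_le_card_fiber_of_nsmul_le_card_of_maps_to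
    (M := ℝ) (b := ε / 4 * n / ((L + 1) ^ 2 * N)) hmaps hne (by
      simp only [Finset.card_product, Finset.card_range, nsmul_eq_mul]
      refine le_trans (le_of_eq ?_) hXcard
      have : (0 : ℝ) < N := by exact_mod_cast hN
      push_cast
      field_simp
      rw [hκ]; ring)
  refine ⟨κ * k₁, κ * k₂, ((k₃ * m : ℕ) : ZMod n), X.filter fun x => col x = (k₁, k₂, k₃), ?_,
    hcard, ?_⟩
  · have hpos : 0 < (X.filter fun x => col x = (k₁, k₂, k₃)).card := by
      have : (0 : ℝ) < (X.filter fun x => col x = (k₁, k₂, k₃)).card := by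
        refine lt_of_lt_of_le ?_ hcard
        have : (0 : ℝ) < N := by exact_mod_cast hN
        positivity
      exact_mod_cast this
    obtain ⟨x, hx⟩ := Finset.card_pos.1 hpos
    simp only [Finset.mem_filter, hX, Finset.mem_univ, true_and, col, Prod.mk.injEq] at hx
    obtain ⟨h1, h2, h3, _⟩ := hx
    rw [← h2, ← h3]
    have c1 := hcell_ge (D x) (hD0 x)
    have c2 := hcell_ge (D (x + 1)) (hD0 _)
    have p1 : 0 ≤ κ * cell (D x) := by positivity
    have p2 : 0 ≤ κ * cell (D (x + 1)) := by positivity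
    rcases c1 with c1 | c1 <;> rcases c2 with c2 | c2 <;> linarith
  · intro x hx
    simp only [Finset.mem_filter, col, Prod.mk.injEq] at hx
    obtain ⟨_, h2, h3, h4⟩ := hx
    have g1 := hcell_le (D x) (hD0 x)
    have g2 := hcell_le (D (x + 1)) (hD0 _)
    rw [h2] at g1
    rw [h3] at g2
    simp only [hD] at g1 g2
    rw [le_div_iff₀ hn] at g1 g2
    refine ⟨g1, g2, ?_⟩
    have hx2 : x - ((k₃ * m : ℕ) : ZMod n) = ((x.val % m : ℕ) : ZMod n) := by
      have e : x.val = m * (x.val / m) + x.val % m := (Nat.div_add_mod _ _).symm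
      conv_lhs => rw [← ZMod.natCast_zmod_val x, e, h4]
      push_cast; ring
    have hlt : x.val % m < m := Nat.mod_lt _ (Nat.succ_pos _)
    unfold coordFrom
    rw [hx2, ZMod.val_cast_of_lt (by omega)]
    exact hlt

/-- A set of indices can be cut at a coordinate `t` so that both sides keep a third of it. -/
lemma exists_split (s : ZMod n) (A : Finset (ZMod n)) :
    ∃ t : ℕ, (A.card : ℝ) / 3 - 2 ≤ (A.filter fun x => coordFrom s x < t).card ∧
      (A.card : ℝ) / 3 - 2 ≤ (A.filter fun x => t < coordFrom s x).card := by
  have hex : ∃ t : ℕ, A.card ≤ 3 * (A.filter fun x => coordFrom s x < t).card := by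
    refine ⟨n, ?_⟩
    rw [Finset.filter_true_of_mem fun x _ => coordFrom_lt s x]
    omega
  have hone : ∀ t : ℕ, (A.filter fun x => coordFrom s x = t).card ≤ 1 := by
    intro t
    rw [Finset.card_le_one]
    intro x hx y hy
    simp only [Finset.mem_filter] at hx hy
    exact coordFrom_injective s (hx.2.trans hy.2.symm)
  have hle : (A.filter fun x => coordFrom s x < Nat.find hex).card * 3 ≤ A.card + 3 := by
    rcases Nat.eq_zero_or_pos (Nat.find hex) with h0 | h0
    · rw [h0]; simp
    · have := Nat.find_min hex (m := Nat.find hex - 1) (by omega)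
      have h1 : (A.filter fun x => coordFrom s x < Nat.find hex) ⊆
          (A.filter fun x => coordFrom s x < Nat.find hex - 1) ∪
          (A.filter fun x => coordFrom s x = Nat.find hex - 1) := by
        intro x hx
        simp only [Finset.mem_filter, Finset.mem_union] at hx ⊢
        rcases hx with ⟨h, h'⟩
        rcases lt_or_eq_of_le (Nat.le_sub_one_of_lt h') with h2 | h2
        · exact Or.inl ⟨h, h2⟩
        · exact Or.inr ⟨h, h2⟩
      have h2 := (Finset.card_le_card h1).trans (Finset.card_union_le _ _)
      have h3 := hone (Nat.find hex - 1)
      omega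
  have hA : A ⊆ (A.filter fun x => coordFrom s x < Nat.find hex) ∪
      ((A.filter fun x => coordFrom s x = Nat.find hex) ∪
      (A.filter fun x => Nat.find hex < coordFrom s x)) := by
    intro x hx
    simp only [Finset.mem_filter, Finset.mem_union]
    rcases lt_trichotomy (coordFrom s x) (Nat.find hex) with h | h | h
    · exact Or.inl ⟨hx, h⟩
    · exact Or.inr (Or.inl ⟨hx, h⟩)
    · exact Or.inr (Or.inr ⟨hx, h⟩)
  have h4 := (Finset.card_le_card hA).trans (Finset.card_union_le _ _)
  have h5 := Finset.card_union_le (A.filter fun x => coordFrom s x = Nat.find hex)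
      (A.filter fun x => Nat.find hex < coordFrom s x)
  have h6 := hone (Nat.find hex)
  have h7 := Nat.find_spec hex
  refine ⟨Nat.find hex, ?_, ?_⟩
  · have : (A.card : ℝ) ≤ 3 * (A.filter fun x => coordFrom s x < Nat.find hex).card := by
      exact_mod_cast h7
    linarith
  · have h8 : A.card ≤ 3 * (A.filter fun x => Nat.find hex < coordFrom s x).card + 6 := by omega
    have : (A.card : ℝ) ≤ 3 * (A.filter fun x => Nat.find hex < coordFrom s x).card + 6 := by
      exact_mod_cast h8
    linarith

end Deterministic

/-! ### Rows with many partners -/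

section Partners

variable {n : ℕ} [NeZero n]

lemma rectWeight_ge (f : ZMod n → ZMod n → ℝ) (τ ν a : ℝ)
    (H : ∀ A B : Finset (ZMod n), rectWeight f A B ≤ A.card * B.card + τ * (n : ℝ) ^ 2)
    (A J : Finset (ZMod n)) (hA : ∀ x ∈ A, a * n ≤ ∑ y, f x y) (hJ : (Jᶜ.card : ℝ) ≤ ν * n) :
    (a - ν) * n * A.card - τ * (n : ℝ) ^ 2 ≤ rectWeight f A J := by
  have h1 : a * n * A.card ≤ rectWeight f A J + rectWeight f A Jᶜ := by
    unfold rectWeight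
    rw [← Finset.sum_add_distrib]
    calc a * n * A.card = ∑ x ∈ A, a * n := by simp; ring
      _ ≤ _ := by
        apply Finset.sum_le_sum
        intro x hx
        rw [Finset.sum_add_sum_compl]
        exact hA x hx
  have h2 := H A Jᶜ
  have h3 : (A.card : ℝ) * Jᶜ.card ≤ A.card * (ν * n) := by gcongr
  nlinarith

lemma rectWeight_shift {n : ℕ} (f : ZMod n → ZMod n → ℝ) (A B : Finset (ZMod n)) :
    rectWeight f (A.map (Equiv.addRight (1 : ZMod n)).toEmbedding)
      (B.map (Equiv.addRight (1 : ZMod n)).toEmbedding) = ∑ x ∈ A, ∑ y ∈ B, f (x + 1) (y + 1) := by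
  simp [rectWeight]

set_option maxHeartbeats 1000000 in
/-- Many rows `x' ∈ A₂` have linearly many partners `x ∈ A₁`, that is, rows for which some `y ∈ J`
has both `f x y ≠ 0` and `f (x' + 1) (y + 1) ≠ 0`. The first moment of the number of such `y`
comes from `sum_mul_ge_of_sum_add`, and the second-moment bound `hK` spreads it over many `x`. The
number of good rows `x'` does not depend on `K`, only the number of their partners does. -/
lemma exists_rows_with_partners (f : ZMod n → ZMod n → ℝ) (ε τ ν γ K a b : ℝ)
    (hε : 0 < ε) (hγ : 0 < γ) (hK0 : 0 < K) (hτ0 : 0 ≤ τ) (hτ : τ ≤ ε * γ / 64)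
    (hν : ν ≤ ε / 16) (hab : 1 + ε / 2 ≤ a + b)
    (hf : ∀ x y, 0 ≤ f x y)
    (H : ∀ A B : Finset (ZMod n), rectWeight f A B ≤ A.card * B.card + τ * (n : ℝ) ^ 2)
    (hK : ∑ x, ∑ x', (∑ y, f x y * f (x' + 1) (y + 1)) ^ 2 ≤ K * (n : ℝ) ^ 4)
    (A₁ A₂ J : Finset (ZMod n)) (hA₁ : ∀ x ∈ A₁, a * n ≤ ∑ y, f x y)
    (hA₂ : ∀ x ∈ A₂, b * n ≤ ∑ y, f (x + 1) y) (hc₁ : γ * n ≤ A₁.card) (hc₂ : γ * n ≤ A₂.card)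
    (hJ : (Jᶜ.card : ℝ) ≤ ν * n) :
    ∃ X ⊆ A₂, ε * γ / 64 * n ≤ X.card ∧ ∀ x' ∈ X, ε ^ 3 * γ ^ 3 / (4096 * K) * n ≤
      (A₁.filter fun x => ∃ y ∈ J, f x y ≠ 0 ∧ f (x' + 1) (y + 1) ≠ 0).card := by
  have hn : (0 : ℝ) < n := by exact_mod_cast Nat.pos_of_ne_zero (NeZero.ne n)
  have hp₁ : (0 : ℝ) < A₁.card := lt_of_lt_of_le (by positivity) hc₁
  have hp₂ : (0 : ℝ) < A₂.card := lt_of_lt_of_le (by positivity) hc₂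
  let S := (Equiv.addRight (1 : ZMod n)).toEmbedding
  set u : ZMod n → ℝ := fun y => (∑ x ∈ A₁, f x y) / A₁.card with hu
  set v : ZMod n → ℝ := fun y => (∑ x ∈ A₂, f (x + 1) (y + 1)) / A₂.card with hv
  have hu0 : ∀ y, 0 ≤ u y := fun y => div_nonneg (Finset.sum_nonneg fun x _ => hf _ _) hp₁.le
  have hv0 : ∀ y, 0 ≤ v y := fun y => div_nonneg (Finset.sum_nonneg fun x _ => hf _ _) hp₂.le
  have hsu : ∀ Y : Finset (ZMod n), ∑ y ∈ Y, u y = rectWeight f A₁ Y / A₁.card := by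
    intro Y
    simp only [hu, rectWeight]
    rw [← Finset.sum_div, Finset.sum_comm]
  have hsv : ∀ Y : Finset (ZMod n), ∑ y ∈ Y, v y
      = rectWeight f (A₂.map S) (Y.map S) / A₂.card := by
    intro Y
    simp only [hv, S]
    rw [rectWeight_shift, ← Finset.sum_div, Finset.sum_comm]
  set ζ : ℝ := τ * n / γ with hζ
  have hζ1 : ∀ c : ℝ, γ * n ≤ c → 0 < c → τ * (n : ℝ) ^ 2 ≤ ζ * c := by
    intro c hc hc0
    calc τ * (n : ℝ) ^ 2 = ζ * (γ * n) := by rw [hζ]; field_simp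
      _ ≤ ζ * c := by gcongr
  have hU : ∀ Y : Finset (ZMod n), ∑ y ∈ Y, u y ≤ (Y.card : ℝ) + ζ := by
    intro Y
    rw [hsu, div_le_iff₀ hp₁]
    have := H A₁ Y
    have := hζ1 _ hc₁ hp₁
    nlinarith
  have hV : ∀ Y : Finset (ZMod n), ∑ y ∈ Y, v y ≤ (Y.card : ℝ) + ζ := by
    intro Y
    rw [hsv, div_le_iff₀ hp₂]
    have := H (A₂.map S) (Y.map S)
    rw [Finset.card_map, Finset.card_map] at this
    have := hζ1 _ hc₂ hp₂
    nlinarith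
  have hJu : (a - ν) * n - ζ ≤ ∑ y ∈ J, u y := by
    rw [hsu, le_div_iff₀ hp₁]
    have := rectWeight_ge f τ ν a H A₁ J hA₁ hJ
    have := hζ1 _ hc₁ hp₁
    nlinarith
  have hJv : (b - ν) * n - ζ ≤ ∑ y ∈ J, v y := by
    rw [hsv, le_div_iff₀ hp₂]
    have hc : ((J.map S)ᶜ.card : ℝ) ≤ ν * n := by
      have : (J.map S)ᶜ.card = Jᶜ.card := by
        rw [Finset.card_compl, Finset.card_compl, Finset.card_map]
      rw [this]; exact hJ
    have := rectWeight_ge f τ ν b H (A₂.map S) (J.map S) (by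
      intro x hx
      rw [Finset.mem_map] at hx
      obtain ⟨z, hz, rfl⟩ := hx
      exact hA₂ z hz) hc
    rw [Finset.card_map] at this
    have := hζ1 _ hc₂ hp₂
    nlinarith
  have hJn : (J.card : ℝ) ≤ n := by
    have := Finset.card_le_univ J
    rw [ZMod.card] at this
    exact_mod_cast this
  have hζn : ζ ≤ ε / 64 * n := by
    rw [hζ, div_le_iff₀ hγ]
    nlinarith
  have hprod : ε / 4 * n ≤ ∑ y ∈ J with u y ≤ 2, u y * v y := by
    have := sum_mul_ge_of_sum_add u v J ζ ((a + b - 2 * ν - 1) * n - 2 * ζ) hu0 hv0 hU hV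
      (by nlinarith)
    refine le_trans ?_ this
    nlinarith
  set J' := J.filter fun y => u y ≤ 2 with hJ'
  set t : ZMod n → ℝ := fun x' => ∑ x ∈ A₁, ∑ y ∈ J', f x y * f (x' + 1) (y + 1) with ht
  have ht2 : ∀ x', t x' = ∑ y ∈ J', (A₁.card * u y) * f (x' + 1) (y + 1) := by
    intro x'
    simp only [ht]
    rw [Finset.sum_comm]
    apply Finset.sum_congr rfl
    intro y _
    rw [← Finset.sum_mul]
    congr 1
    simp only [hu]
    field_simp
  have htsum : ∑ x' ∈ A₂, t x' = A₁.card * A₂.card * ∑ y ∈ J', u y * v y := by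
    simp only [ht2]
    rw [Finset.sum_comm, Finset.mul_sum]
    apply Finset.sum_congr rfl
    intro y _
    rw [← Finset.mul_sum]
    simp only [hv]
    field_simp
  set X₂ := A₂.filter fun x' => ε / 8 * A₁.card * n ≤ t x' with hX₂
  have hX₂card : ε * γ / 32 * n ≤ X₂.card := by
    have h1 : ∑ x' ∈ A₂, t x' ≤ ∑ x' ∈ X₂, t x' + A₂.card * (ε / 8 * A₁.card * n) := by
      rw [← Finset.sum_filter_add_sum_filter_not A₂ (fun x' => ε / 8 * A₁.card * n ≤ t x')]
      gcongr
      calc _ ≤ ∑ x ∈ A₂.filter (fun x' => ¬ (ε / 8 * A₁.card * n ≤ t x')),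
            (ε / 8 * A₁.card * n) := by
            apply Finset.sum_le_sum
            intro x hx
            simp only [Finset.mem_filter, not_le] at hx
            exact hx.2.le
        _ ≤ ∑ x ∈ A₂, (ε / 8 * A₁.card * n) := by
            apply Finset.sum_le_sum_of_subset_of_nonneg (Finset.filter_subset _ _)
            intros; positivity
        _ = _ := by simp
    have h2 : ∑ x' ∈ X₂, t x' ≤ 2 * A₁.card * (X₂.card * n + τ * (n : ℝ) ^ 2) := by
      calc ∑ x' ∈ X₂, t x' ≤ ∑ x' ∈ X₂, ∑ y ∈ J', (A₁.card * 2) * f (x' + 1) (y + 1) := by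
            apply Finset.sum_le_sum
            intro x' _
            rw [ht2]
            apply Finset.sum_le_sum
            intro y hy
            have := (Finset.mem_filter.1 hy).2
            have := hf (x' + 1) (y + 1)
            gcongr
        _ = 2 * A₁.card * rectWeight f (X₂.map S) (J'.map S) := by
            simp only [S]
            rw [rectWeight_shift, Finset.mul_sum]
            apply Finset.sum_congr rfl
            intro x' _
            rw [Finset.mul_sum]
            apply Finset.sum_congr rfl
            intro y _
            ring
        _ ≤ _ := by
            have h3 := H (X₂.map S) (J'.map S)
            rw [Finset.card_map, Finset.card_map] at h3
            have h4 : (J'.card : ℝ) ≤ n := by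
              refine le_trans ?_ hJn
              exact_mod_cast Finset.card_le_card (Finset.filter_subset _ _)
            have h5 : (X₂.card : ℝ) * J'.card ≤ X₂.card * n := by gcongr
            gcongr
            linarith
    rw [htsum] at h1
    have h3 : A₁.card * A₂.card * (ε / 4 * n) ≤ A₁.card * A₂.card * ∑ y ∈ J', u y * v y := by
      gcongr
    have h4 : A₁.card * (A₂.card * (ε / 8 * n)) ≤
        A₁.card * (2 * (X₂.card * n + τ * (n : ℝ) ^ 2)) := by nlinarith
    have h5 := le_of_mul_le_mul_left h4 hp₁
    have h6 : γ * n * (ε / 8 * n) ≤ A₂.card * (ε / 8 * n) := by gcongr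
    have h7 : τ * (n : ℝ) ^ 2 ≤ ε * γ / 64 * (n : ℝ) ^ 2 := by gcongr
    have h8 : (ε * γ / 32 * n) * n ≤ X₂.card * n := by nlinarith
    exact le_of_mul_le_mul_right h8 hn
  set tw : ZMod n → ZMod n → ℝ := fun x x' => ∑ y, f x y * f (x' + 1) (y + 1) with htw
  set Λ : ℝ := K * n ^ 3 * 64 / (ε * γ) with hΛ
  have hΛ0 : 0 < Λ := by positivity
  set Z := Finset.univ.filter fun x' : ZMod n => Λ < ∑ x, tw x x' ^ 2 with hZ
  have hZcard : (Z.card : ℝ) ≤ ε * γ / 64 * n := by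
    have h1 : Z.card * Λ ≤ K * (n : ℝ) ^ 4 := by
      calc Z.card * Λ = ∑ x' ∈ Z, Λ := by simp
        _ ≤ ∑ x' ∈ Z, ∑ x, tw x x' ^ 2 := by
            apply Finset.sum_le_sum
            intro x hx
            exact (Finset.mem_filter.1 hx).2.le
        _ ≤ ∑ x', ∑ x, tw x x' ^ 2 := by
            apply Finset.sum_le_sum_of_subset_of_nonneg (Finset.subset_univ _)
            intros; positivity
        _ ≤ _ := by rw [Finset.sum_comm]; exact hK
    have h2 : K * (n : ℝ) ^ 4 = (ε * γ / 64 * n) * Λ := by rw [hΛ]; field_simp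
    rw [h2] at h1
    exact le_of_mul_le_mul_right h1 hΛ0
  refine ⟨X₂ \ Z, (Finset.sdiff_subset).trans (Finset.filter_subset _ _), ?_, ?_⟩
  · have h1 : X₂.card ≤ (X₂ \ Z).card + Z.card := by
      have := Finset.le_card_sdiff Z X₂
      omega
    have h2 : (X₂.card : ℝ) ≤ (X₂ \ Z).card + Z.card := by exact_mod_cast h1
    linarith
  · intro x' hx'
    rw [Finset.mem_sdiff, hX₂, hZ] at hx'
    simp only [Finset.mem_filter, Finset.mem_univ, true_and, not_lt] at hx'
    obtain ⟨⟨_, h1⟩, h2⟩ := hx'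
    set R := A₁.filter fun x => ∃ y ∈ J, f x y ≠ 0 ∧ f (x' + 1) (y + 1) ≠ 0 with hR
    have h3 : t x' ≤ ∑ x ∈ R, tw x x' := by
      have h4 : t x' = ∑ x ∈ R, ∑ y ∈ J', f x y * f (x' + 1) (y + 1) := by
        simp only [ht]
        symm
        apply Finset.sum_subset (Finset.filter_subset _ _)
        intro x hx hxR
        apply Finset.sum_eq_zero
        intro y hy
        by_contra hne
        apply hxR
        rw [Finset.mem_filter]
        exact ⟨hx, y, (Finset.mem_filter.1 hy).1, left_ne_zero_of_mul hne,
          right_ne_zero_of_mul hne⟩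
      rw [h4]
      apply Finset.sum_le_sum
      intro x _
      apply Finset.sum_le_sum_of_subset_of_nonneg (Finset.subset_univ _)
      intros
      exact mul_nonneg (hf _ _) (hf _ _)
    have h5 : (∑ x ∈ R, tw x x') ^ 2 ≤ R.card * Λ := by
      refine (sq_sum_le_card_mul_sum_sq).trans ?_
      gcongr
      refine le_trans ?_ h2
      apply Finset.sum_le_sum_of_subset_of_nonneg (Finset.subset_univ _)
      intros; positivity
    have h6 : ε / 8 * (γ * n) * n ≤ t x' := le_trans (by gcongr) h1
    have h7 : (ε / 8 * (γ * n) * n) ^ 2 ≤ R.card * Λ := by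
      refine le_trans ?_ h5
      have : 0 ≤ ε / 8 * (γ * n) * n := by positivity
      gcongr
      exact h6.trans h3
    have h8 : (ε / 8 * (γ * n) * n) ^ 2 = (ε ^ 3 * γ ^ 3 / (4096 * K) * n) * Λ := by
      rw [hΛ]; field_simp; ring
    rw [h8] at h7
    exact le_of_mul_le_mul_right h7 hΛ0

end Partners

/-! ### Closing edges of shortcuts -/

section Closing

variable {n : ℕ} [NeZero n]

lemma coordFrom_add_natCast (s x : ZMod n) (k : ℕ) (h : coordFrom s x + k < n) :
    coordFrom s (x + (k : ZMod n)) = coordFrom s x + k := by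
  have h1 : x + (k : ZMod n) - s = ((coordFrom s x + k : ℕ) : ZMod n) := by
    conv_lhs => rw [← add_coordFrom s x]
    push_cast
    ring
  unfold coordFrom at h1 h ⊢
  rw [h1, ZMod.val_cast_of_lt h]

/-- Given linearly many rows `x ∈ R₀` with an admissible third vertex `y` each, almost a `b` fraction
of all vertices are admissible as the endpoint `i₄ + l + 1` of the fourth edge. A common arc of
length about `n / N` containing the third vertices is fixed by pigeonhole and then avoided. -/
lemma exists_endpoints (f : ZMod n → ZMod n → ℝ) (P : ZMod n → ZMod n → Prop) (τ ρ b : ℝ)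
    (N l : ℕ) (s : ZMod n) (hN : 0 < N) (hn : 8 * N ≤ n) (hl : l ≤ n / N) (hρ : 0 < ρ)
    (hτ0 : 0 ≤ τ)
    (H : ∀ A B : Finset (ZMod n), rectWeight f A B ≤ A.card * B.card + τ * (n : ℝ) ^ 2)
    (R₀ : Finset (ZMod n)) (hR₀ : ρ * n ≤ R₀.card) (hb : ∀ x ∈ R₀, b * n ≤ ∑ y, f (x + 1) y)
    (hP : ∀ x ∈ R₀, ∃ y, n / N + 1 < coordFrom s y ∧ coordFrom s y + 1 < n ∧ P x y) :
    ∃ B : Finset (ZMod n), (b - 5 / N - 2 * τ * N / ρ) * n ≤ B.card ∧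
      ∀ y ∈ B, n / N + 1 < coordFrom s y ∧ ∃ x ∈ R₀, ∃ i₃ i₄ : ZMod n,
        y = i₄ + (l : ZMod n) + 1 ∧ f (x + 1) i₄ ≠ 0 ∧ P x i₃ ∧ n / N + 1 < coordFrom s i₃ ∧
        coordFrom s i₃ + 1 < n ∧ n / N + 1 < coordFrom s i₄ ∧ coordFrom s i₄ + l + 1 < n ∧
        (coordFrom s i₃ + 1 < coordFrom s i₄ ∨ coordFrom s i₄ + l + 1 < coordFrom s i₃) := by
  have hn0 : (0 : ℝ) < n := by exact_mod_cast Nat.pos_of_ne_zero (NeZero.ne n)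
  have hN0 : (0 : ℝ) < N := by exact_mod_cast hN
  choose! w hw1 hw2 hw3 using hP
  set m := n / N + 1 with hm
  have hmaps : ∀ x ∈ R₀, coordFrom s (w x) / m ∈ Finset.range N := by
    intro x _
    rw [Finset.mem_range, Nat.div_lt_iff_lt_mul (Nat.succ_pos _)]
    have h1 := coordFrom_lt s (w x)
    have h2 := Nat.lt_div_mul_add (a := n) hN
    calc coordFrom s (w x) < n / N * N + N := by omega
      _ = N * m := by rw [hm]; ring
  obtain ⟨k, -, hcard⟩ := Finset.exists_le_card_fiber_of_nsmul_le_card_of_maps_to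
    (M := ℝ) (b := ρ / N * n) hmaps ⟨0, by simpa using hN⟩ (by
      rw [Finset.card_range, nsmul_eq_mul]
      refine le_trans (le_of_eq ?_) hR₀
      field_simp)
  set R := R₀.filter fun x => coordFrom s (w x) / m = k with hR
  have hR0 : (0 : ℝ) < R.card := lt_of_lt_of_le (by positivity) hcard
  set J : Finset (ZMod n) := Finset.univ.filter fun y => m < coordFrom s y ∧
    coordFrom s y + l + 1 < n ∧ (coordFrom s y + l + 1 < k * m ∨ (k + 1) * m < coordFrom s y)
    with hJ
  have hJc : (Jᶜ.card : ℝ) ≤ 5 / N * n := by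
    have hsub : Jᶜ ⊆ (Finset.univ.filter fun x : ZMod n => 0 ≤ coordFrom s x ∧
          coordFrom s x < m + 1) ∪
        ((Finset.univ.filter fun x : ZMod n => n - l - 1 ≤ coordFrom s x ∧ coordFrom s x < n) ∪
        (Finset.univ.filter fun x : ZMod n => k * m - l - 1 ≤ coordFrom s x ∧
          coordFrom s x < (k + 1) * m + 1)) := by
      intro y hy
      have := coordFrom_lt s y
      simp only [hJ, Finset.mem_compl, Finset.mem_filter, Finset.mem_univ, true_and,
        Finset.mem_union] at hy ⊢
      omega
    have h1 := (Finset.card_le_card hsub).trans (Finset.card_union_le _ _)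
    have h2 := Finset.card_union_le
      (Finset.univ.filter fun x : ZMod n => n - l - 1 ≤ coordFrom s x ∧ coordFrom s x < n)
      (Finset.univ.filter fun x : ZMod n => k * m - l - 1 ≤ coordFrom s x ∧
          coordFrom s x < (k + 1) * m + 1)
    have h3 := card_coord_le s 0 (m + 1)
    have h4 := card_coord_le s (n - l - 1) n
    have h5 := card_coord_le s (k * m - l - 1) ((k + 1) * m + 1)
    have h6 : (k + 1) * m = k * m + m := by ring
    have h7 : Jᶜ.card ≤ 4 * (n / N) + 8 := by omega
    have h8 : (Jᶜ.card : ℝ) ≤ 4 * ((n / N : ℕ) : ℝ) + 8 := by exact_mod_cast h7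
    have h9 : ((n / N : ℕ) : ℝ) ≤ n / N := Nat.cast_div_le
    have h10 : (8 : ℝ) ≤ n / N := by
      rw [le_div_iff₀ hN0]; exact_mod_cast hn
    calc (Jᶜ.card : ℝ) ≤ 4 * (n / N) + n / N := by linarith
      _ = 5 / N * n := by ring
  set B₄ := J.filter fun y => ∃ x ∈ R, f (x + 1) y ≠ 0 with hB₄
  let S := (Equiv.addRight (1 : ZMod n)).toEmbedding
  have hlow := rectWeight_ge f τ (5 / N) b H (R.map S) J (by
    intro x hx
    rw [Finset.mem_map] at hx
    obtain ⟨z, hz, rfl⟩ := hx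
    exact hb z (Finset.mem_of_mem_filter z hz)) hJc
  have heq : rectWeight f (R.map S) J = rectWeight f (R.map S) B₄ := by
    unfold rectWeight
    apply Finset.sum_congr rfl
    intro x hx
    symm
    apply Finset.sum_subset (Finset.filter_subset _ _)
    intro y hy hyB
    by_contra hne
    apply hyB
    rw [Finset.mem_map] at hx
    obtain ⟨z, hz, rfl⟩ := hx
    exact Finset.mem_filter.2 ⟨hy, z, hz, hne⟩
  have hup := H (R.map S) B₄
  rw [heq] at hlow
  rw [Finset.card_map] at hlow hup
  have hτR : τ * (n : ℝ) ^ 2 ≤ (τ * N / ρ * n) * R.card := by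
    calc τ * (n : ℝ) ^ 2 = (τ * N / ρ * n) * (ρ / N * n) := by field_simp
      _ ≤ _ := by gcongr
  have hBcard : (b - 5 / N - 2 * τ * N / ρ) * n ≤ B₄.card := by
    have : ((b - 5 / N - 2 * τ * N / ρ) * n) * R.card ≤ B₄.card * R.card := by
      have e : ((b - 5 / N - 2 * τ * N / ρ) * n) * R.card =
        (b - 5 / N) * n * R.card - 2 * ((τ * N / ρ * n) * R.card) := by ring
      rw [e]
      linarith
    exact le_of_mul_le_mul_right this hR0
  refine ⟨B₄.map (Equiv.addRight ((l : ZMod n) + 1)).toEmbedding, ?_, ?_⟩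
  · rw [Finset.card_map]; exact hBcard
  · intro y hy
    rw [Finset.mem_map] at hy
    obtain ⟨i₄, h4, rfl⟩ := hy
    rw [hB₄, Finset.mem_filter, hJ, Finset.mem_filter] at h4
    obtain ⟨⟨-, g1, g2, g3⟩, x, hx, hne⟩ := h4
    rw [hR, Finset.mem_filter] at hx
    have e : (Equiv.addRight ((l : ZMod n) + 1)).toEmbedding i₄ = i₄ + ((l + 1 : ℕ) : ZMod n) := by
      simp [add_assoc]
    refine ⟨?_, x, hx.1, w x, i₄, by simp [add_assoc], hne, hw3 x hx.1, hw1 x hx.1, hw2 x hx.1,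
      g1, g2, ?_⟩
    · rw [e, coordFrom_add_natCast _ _ _ (by omega)]
      omega
    · have h1 : k * m ≤ coordFrom s (w x) := by
        rw [← hx.2]; exact Nat.div_mul_le_self _ _
      have h2 : coordFrom s (w x) < (k + 1) * m := by
        rw [← hx.2]; exact Nat.lt_mul_of_div_lt (Nat.lt_succ_self _) (Nat.succ_pos _)
      omega

set_option maxHeartbeats 1000000 in
/-- The deterministic core. If `f` has no rectangle much denser than average `1`, total average at
least `1/2 + ε`, and a bounded twisted second moment, then some rectangle `X × J` carries weight
exceeding the size of a set `Q` by `θ n²` with `θ = ε² γ / 512`, where each pair of `X × J` outside `Q` closes three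
edges in the support of `f` to an `l`-shortcut. The excess `θ` does not depend on `K`. -/
lemma exists_excess (f : ZMod n → ZMod n → ℝ) (ε τ K γ ρ : ℝ) (L N l : ℕ)
    (hε : 0 < ε) (hε1 : ε ≤ 1) (hL : 8 / ε ≤ L) (hN : 100 ≤ ε * N) (hK0 : 0 < K)
    (hγ : γ = ε / (16 * ((L + 1) ^ 2 * N))) (hρ : ρ = ε ^ 3 * γ ^ 3 / (4096 * K))
    (hn : 8 * N ≤ n) (hγn : 6 ≤ γ * n) (hl : l ≤ n / N) (hτ0 : 0 ≤ τ)
    (hτ1 : τ ≤ ε ^ 2 * γ / 512) (hτ2 : 16 * τ * N ≤ ε * ρ)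
    (hf : ∀ x y, 0 ≤ f x y)
    (H : ∀ A B : Finset (ZMod n), rectWeight f A B ≤ A.card * B.card + τ * (n : ℝ) ^ 2)
    (htot : (1 / 2 + ε) * (n : ℝ) ^ 2 ≤ rectWeight f Finset.univ Finset.univ)
    (hK : ∑ x, ∑ x', (∑ y, f x y * f (x' + 1) (y + 1)) ^ 2 ≤ K * (n : ℝ) ^ 4) :
    ∃ (X J : Finset (ZMod n)) (Q : Finset (ZMod n × ZMod n)), Q ⊆ X ×ˢ J ∧
      Q.card + ε ^ 2 * γ / 512 * (n : ℝ) ^ 2 ≤ rectWeight f X J ∧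
      ∀ x ∈ X, ∀ y ∈ J, (x, y) ∉ Q → ∃ i₁ i₃ i₄ : ZMod n, IsShortcutTuple l i₁ x i₃ i₄ ∧
        y = i₄ + (l : ZMod n) + 1 ∧ f i₁ i₃ ≠ 0 ∧ f (i₁ + 1) i₄ ≠ 0 ∧
        f (x + 1) (i₃ + 1) ≠ 0 := by
  have hn0 : (0 : ℝ) < n := by exact_mod_cast Nat.pos_of_ne_zero (NeZero.ne n)
  have hN0 : (0 : ℝ) < N := by
    by_contra h
    push Not at h
    nlinarith
  have hNpos : 0 < N := by exact_mod_cast hN0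
  have hLpos : (0 : ℝ) < L := lt_of_lt_of_le (by positivity) hL
  have hγ0 : 0 < γ := by rw [hγ]; positivity
  have hρ0 : 0 < ρ := by rw [hρ]; positivity
  have hγ1 : γ ≤ 1 := by
    rw [hγ, div_le_one (by positivity)]
    have : 1 ≤ ((L : ℝ) + 1) ^ 2 := by nlinarith
    nlinarith
  have hN100 : 100 ≤ N := by
    have : (100 : ℝ) ≤ N := by nlinarith
    exact_mod_cast this
  have hdiv : n / N * N ≤ n := Nat.div_mul_le_self n N
  have hdiv2 : n / N * 100 ≤ n := le_trans (Nat.mul_le_mul_left _ hN100) hdiv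
  have h8 : (8 : ℝ) ≤ n / N := by
    rw [le_div_iff₀ hN0]; exact_mod_cast hn
  have hdivR : ((n / N : ℕ) : ℝ) ≤ n / N := Nat.cast_div_le
  have hinvN : 1 / (N : ℝ) ≤ ε / 100 := by
    rw [div_le_div_iff₀ hN0 (by norm_num)]; linarith
  have hτε : τ ≤ ε / 4 := by
    refine hτ1.trans ?_
    have : ε ^ 2 * γ ≤ ε * 1 := by
      rw [pow_two]
      have : ε * γ ≤ 1 := by nlinarith
      nlinarith
    linarith
  obtain ⟨a, b, s, A, hab, hAc, hA⟩ := exists_class f ε τ L N hε hε1 hτε hL hNpos (by omega) hf H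
    htot
  obtain ⟨t, ht1, ht2⟩ := exists_split s A
  set A₁ := A.filter fun x => coordFrom s x < t with hA₁
  set A₂ := A.filter fun x => t < coordFrom s x with hA₂
  have hA4 : 4 * (γ * n) ≤ A.card := by
    refine le_trans (le_of_eq ?_) hAc
    rw [hγ]; field_simp; ring
  have hc₁ : γ * n ≤ A₁.card := by linarith
  have hc₂ : γ * n ≤ A₂.card := by linarith
  set J₃ : Finset (ZMod n) := Finset.univ.filter fun y => n / N + 1 < coordFrom s y ∧
    coordFrom s y + 1 < n with hJ₃
  have hJ₃c : (J₃ᶜ.card : ℝ) ≤ 2 / N * n := by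
    have hsub : J₃ᶜ ⊆ (Finset.univ.filter fun x : ZMod n => 0 ≤ coordFrom s x ∧
          coordFrom s x < n / N + 2) ∪
        (Finset.univ.filter fun x : ZMod n => n - 1 ≤ coordFrom s x ∧ coordFrom s x < n) := by
      intro y hy
      have := coordFrom_lt s y
      simp only [hJ₃, Finset.mem_compl, Finset.mem_filter, Finset.mem_univ, true_and,
        Finset.mem_union] at hy ⊢
      omega
    have h1 := (Finset.card_le_card hsub).trans (Finset.card_union_le _ _)
    have h3 := card_coord_le s 0 (n / N + 2)
    have h4 := card_coord_le s (n - 1) n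
    have h7 : J₃ᶜ.card ≤ n / N + 3 := by omega
    have h8' : (J₃ᶜ.card : ℝ) ≤ ((n / N : ℕ) : ℝ) + 3 := by exact_mod_cast h7
    calc (J₃ᶜ.card : ℝ) ≤ n / N + n / N := by linarith
      _ = 2 / N * n := by ring
  have hν : 2 / (N : ℝ) ≤ ε / 16 := by
    have : 2 / (N : ℝ) = 2 * (1 / N) := by ring
    rw [this]; linarith
  obtain ⟨X, hXA, hXc, hX⟩ := exists_rows_with_partners f ε τ (2 / N) γ K a b hε hγ0 hK0 hτ0
    (hτ1.trans (by
      have : ε ^ 2 * γ ≤ ε * γ := by nlinarith [mul_pos hε hγ0]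
      have : 0 < ε * γ := mul_pos hε hγ0
      linarith))
    hν hab hf H hK A₁ A₂ J₃ (fun x hx => (hA x (Finset.mem_of_mem_filter x hx)).1)
    (fun x hx => (hA x (Finset.mem_of_mem_filter x hx)).2.1) hc₁ hc₂ hJ₃c
  rw [← hρ] at hX
  have hend : ∀ x' ∈ X, ∃ B : Finset (ZMod n), (b - 5 / N - 2 * τ * N / ρ) * n ≤ B.card ∧
      ∀ y ∈ B, n / N + 1 < coordFrom s y ∧ ∃ x ∈ A₁, ∃ i₃ i₄ : ZMod n,
        y = i₄ + (l : ZMod n) + 1 ∧ f (x + 1) i₄ ≠ 0 ∧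
        (f x i₃ ≠ 0 ∧ f (x' + 1) (i₃ + 1) ≠ 0) ∧ n / N + 1 < coordFrom s i₃ ∧
        coordFrom s i₃ + 1 < n ∧ n / N + 1 < coordFrom s i₄ ∧ coordFrom s i₄ + l + 1 < n ∧
        (coordFrom s i₃ + 1 < coordFrom s i₄ ∨ coordFrom s i₄ + l + 1 < coordFrom s i₃) := by
    intro x' hx'
    obtain ⟨B, hB1, hB2⟩ := exists_endpoints f
      (fun x y => f x y ≠ 0 ∧ f (x' + 1) (y + 1) ≠ 0) τ ρ b N l s hNpos hn hl hρ0 hτ0 H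
      (A₁.filter fun x => ∃ y ∈ J₃, f x y ≠ 0 ∧ f (x' + 1) (y + 1) ≠ 0) (hX x' hx')
      (fun x hx => (hA x (Finset.mem_of_mem_filter x (Finset.mem_of_mem_filter x hx))).2.1)
      (by
        intro x hx
        obtain ⟨-, y, hy, hyy⟩ := Finset.mem_filter.1 hx
        obtain ⟨-, hy1, hy2⟩ := Finset.mem_filter.1 hy
        exact ⟨y, hy1, hy2, hyy⟩)
    refine ⟨B, hB1, fun y hy => ?_⟩
    obtain ⟨h1, x, hx, h2⟩ := hB2 y hy
    exact ⟨h1, x, Finset.mem_of_mem_filter x hx, h2⟩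
  choose! B hB1 hB2 using hend
  set J : Finset (ZMod n) := Finset.univ.filter fun y => n / N + 1 < coordFrom s y with hJ
  have hJc : (Jᶜ.card : ℝ) ≤ 2 / N * n := by
    refine le_trans ?_ hJ₃c
    have : Jᶜ ⊆ J₃ᶜ := by
      apply Finset.compl_subset_compl.2
      intro y hy
      simp only [hJ₃, hJ, Finset.mem_filter, Finset.mem_univ, true_and] at hy ⊢
      exact hy.1
    exact_mod_cast Finset.card_le_card this
  set Q := (X ×ˢ J).filter fun z => z.2 ∉ B z.1 with hQ
  refine ⟨X, J, Q, Finset.filter_subset _ _, ?_, ?_⟩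
  · have hrow : ∀ x ∈ X, ((J.filter fun y => y ∉ B x).card : ℝ) ≤
        (1 - (b - 5 / N - 2 * τ * N / ρ)) * n := by
      intro x hx
      have hBJ : B x ⊆ J := fun y hy =>
        Finset.mem_filter.2 ⟨Finset.mem_univ _, (hB2 x hx y hy).1⟩
      have h1 : (J.filter fun y => y ∉ B x) = J \ B x := by
        ext y; simp
      have h2 : (J \ B x).card + (B x).card = J.card := Finset.card_sdiff_add_card_eq_card hBJ
      have h3 : J.card ≤ n := by
        have := Finset.card_le_univ J
        rwa [ZMod.card] at this
      have h4 : ((J \ B x).card : ℝ) + (B x).card ≤ n := by exact_mod_cast h2.le.trans h3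
      rw [h1]
      have := hB1 x hx
      linarith
    have hQc : (Q.card : ℝ) ≤ X.card * ((1 - (b - 5 / N - 2 * τ * N / ρ)) * n) := by
      have h1 : Q.card = ∑ x ∈ X, (J.filter fun y => y ∉ B x).card := by
        rw [hQ, Finset.card_filter, Finset.sum_product]
        apply Finset.sum_congr rfl
        intro x _
        rw [Finset.card_filter]
      rw [h1]
      push_cast
      calc _ ≤ ∑ x ∈ X, (1 - (b - 5 / N - 2 * τ * N / ρ)) * n := Finset.sum_le_sum hrow
        _ = _ := by simp
    have hlow := rectWeight_ge f τ (2 / N) a H X J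
      (fun x hx => (hA x (Finset.mem_of_mem_filter x (hXA hx))).1) hJc
    have h5 : 2 * τ * N / ρ ≤ ε / 8 := by
      rw [div_le_iff₀ hρ0]; linarith
    have h6 : ε / 4 ≤ (a - 2 / N) - (1 - (b - 5 / N - 2 * τ * N / ρ)) := by
      have e1 : 2 / (N : ℝ) = 2 * (1 / N) := by ring
      have e2 : 5 / (N : ℝ) = 5 * (1 / N) := by ring
      rw [e1, e2]
      linarith
    have h7 : ε / 4 * (n * X.card) ≤
        ((a - 2 / N) - (1 - (b - 5 / N - 2 * τ * N / ρ))) * (n * X.card) := by gcongr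
    have h8' : ε / 4 * (n * (ε * γ / 64 * n)) ≤ ε / 4 * (n * X.card) := by gcongr
    have h9 : τ * (n : ℝ) ^ 2 ≤ ε ^ 2 * γ / 512 * (n : ℝ) ^ 2 := by gcongr
    nlinarith
  · intro x hx y hy hxy
    have hyB : y ∈ B x := by
      by_contra h
      exact hxy (Finset.mem_filter.2 ⟨Finset.mem_product.2 ⟨hx, hy⟩, h⟩)
    obtain ⟨-, i₁, hi₁, i₃, i₄, e, f1, ⟨f2, f3⟩, g1, g2, g3, g4, g5⟩ := hB2 x hx y hyB
    refine ⟨i₁, i₃, i₄, ?_, e, f2, f1, f3⟩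
    have c1 := (Finset.mem_filter.1 hi₁).2
    obtain ⟨hxA, c2⟩ := Finset.mem_filter.1 (hXA hx)
    have c3 := (hA x hxA).2.2
    rw [← add_coordFrom s i₁, ← add_coordFrom s x, ← add_coordFrom s i₃, ← add_coordFrom s i₄]
    apply isShortcutTuple_of_coord <;> omega

end Closing

/-! ### Bernoulli weights on the subsets of a finite set -/

section Bernoulli

variable {α : Type*}

/-- Probability that the `p`-random subset of `E` equals `T`. -/
noncomputable def bernWeight (p : ℝ) (E T : Finset α) : ℝ := p ^ T.card * (1 - p) ^ (E \ T).card

/-- Probability that the `p`-random subset of `E` satisfies `P`. -/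
noncomputable def bernProb (p : ℝ) (E : Finset α) (P : Finset α → Prop) : ℝ :=
  ∑ T ∈ E.powerset with P T, bernWeight p E T

lemma bernWeight_nonneg {p : ℝ} (h0 : 0 ≤ p) (h1 : p ≤ 1) (E T : Finset α) :
    0 ≤ bernWeight p E T :=
  mul_nonneg (pow_nonneg h0 _) (pow_nonneg (by linarith) _)

lemma bernProb_nonneg {p : ℝ} (h0 : 0 ≤ p) (h1 : p ≤ 1) (E : Finset α) (P : Finset α → Prop) :
    0 ≤ bernProb p E P :=
  Finset.sum_nonneg fun T _ => bernWeight_nonneg h0 h1 E T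

lemma bernProb_mono {p : ℝ} (h0 : 0 ≤ p) (h1 : p ≤ 1) (E : Finset α) {P Q : Finset α → Prop}
    (h : ∀ T ⊆ E, P T → Q T) : bernProb p E P ≤ bernProb p E Q := by
  unfold bernProb
  apply Finset.sum_le_sum_of_subset_of_nonneg
  · intro T hT
    simp only [Finset.mem_filter, Finset.mem_powerset] at hT ⊢
    exact ⟨hT.1, h T hT.1 hT.2⟩
  · intros; exact bernWeight_nonneg h0 h1 _ _

lemma bernProb_or {p : ℝ} (h0 : 0 ≤ p) (h1 : p ≤ 1) (E : Finset α) (P Q : Finset α → Prop) :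
    bernProb p E (fun T => P T ∨ Q T) ≤ bernProb p E P + bernProb p E Q := by
  unfold bernProb
  simp only [Finset.sum_filter, ← Finset.sum_add_distrib]
  apply Finset.sum_le_sum
  intro T _
  have := bernWeight_nonneg h0 h1 E T
  by_cases hP : P T <;> by_cases hQ : Q T <;> simp [hP, hQ, this]

lemma bernProb_exists {ι : Type*} {p : ℝ} (h0 : 0 ≤ p) (h1 : p ≤ 1) (E : Finset α)
    (I : Finset ι) (P : ι → Finset α → Prop) :
    bernProb p E (fun T => ∃ i ∈ I, P i T) ≤ ∑ i ∈ I, bernProb p E (P i) := by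
  classical
  induction I using Finset.induction_on with
  | empty => simp [bernProb]
  | insert a s ha ih =>
    rw [Finset.sum_insert ha]
    refine le_trans (bernProb_mono h0 h1 E (Q := fun T => P a T ∨ ∃ i ∈ s, P i T) ?_)
      ((bernProb_or h0 h1 E _ _).trans (by linarith))
    intro T _ hT
    simpa using hT

/-- The generating function of a `p`-random subset conditioned to contain `S`. -/
lemma sum_bernWeight_mul_prod (p : ℝ) {E S : Finset α} (hS : S ⊆ E) (c : α → ℝ) :
    ∑ T ∈ E.powerset with S ⊆ T, bernWeight p E T * ∏ e ∈ T \ S, c e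
      = p ^ S.card * ∏ e ∈ E \ S, (p * c e + (1 - p)) := by
  have h := Finset.prod_add (fun e => if e ∈ S then p else p * c e)
    (fun e => if e ∈ S then 0 else 1 - p) E
  have hl : ∏ e ∈ E, ((if e ∈ S then p else p * c e) + (if e ∈ S then 0 else 1 - p))
      = p ^ S.card * ∏ e ∈ E \ S, (p * c e + (1 - p)) := by
    rw [← Finset.prod_sdiff hS, mul_comm]
    congr 1
    · rw [Finset.prod_congr rfl (g := fun _ => p)]
      · simp
      · intro e he; simp [he]
    · apply Finset.prod_congr rfl
      intro e he
      simp [(Finset.mem_sdiff.1 he).2]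
  rw [← hl, h, Finset.sum_filter]
  apply Finset.sum_congr rfl
  intro T hT
  split_ifs with hST
  · have h1 : ∏ e ∈ T, (if e ∈ S then p else p * c e) = p ^ T.card * ∏ e ∈ T \ S, c e := by
      rw [← Finset.prod_sdiff hST, ← Finset.card_sdiff_add_card_eq_card hST, pow_add,
        Finset.prod_congr rfl (g := fun e => p * c e), Finset.prod_mul_distrib]
      · rw [Finset.prod_congr (s₁ := S) rfl (g := fun _ => p)]
        · simp; ring
        · intro e he; simp [he]
      · intro e he
        simp [(Finset.mem_sdiff.1 he).2]
    have h2 : ∏ e ∈ E \ T, (if e ∈ S then (0 : ℝ) else 1 - p) = (1 - p) ^ (E \ T).card := by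
      rw [Finset.prod_congr rfl (g := fun _ => 1 - p)]
      · simp
      · intro e he
        have : e ∉ S := fun h => (Finset.mem_sdiff.1 he).2 (hST h)
        simp [this]
    rw [h1, h2]
    unfold bernWeight
    ring
  · obtain ⟨e, he, heT⟩ := Finset.not_subset.1 hST
    rw [Finset.prod_eq_zero (i := e) (s := E \ T) (Finset.mem_sdiff.2 ⟨hS he, heT⟩) (by simp [he])]
    simp

lemma sum_bernWeight_superset (p : ℝ) {E S : Finset α} (hS : S ⊆ E) :
    ∑ T ∈ E.powerset with S ⊆ T, bernWeight p E T = p ^ S.card := by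
  have := sum_bernWeight_mul_prod p hS (fun _ => 1)
  simpa using this

lemma sum_bernWeight (p : ℝ) (E : Finset α) : ∑ T ∈ E.powerset, bernWeight p E T = 1 := by
  have := sum_bernWeight_superset p (Finset.empty_subset E)
  simpa using this

lemma bernProb_compl (p : ℝ) (E : Finset α) (P : Finset α → Prop) :
    bernProb p E P = 1 - bernProb p E (fun T => ¬ P T) := by
  rw [← sum_bernWeight p E, eq_sub_iff_add_eq]
  unfold bernProb
  simp only [Finset.sum_filter, ← Finset.sum_add_distrib]
  apply Finset.sum_congr rfl
  intro T _
  by_cases hP : P T <;> simp [hP]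

/-- Exponential moment of a weighted count over a `p`-random subset containing `S`, for weights
in `[0, 2]`. -/
lemma sum_bernWeight_exp_le {p : ℝ} (h0 : 0 ≤ p) (h1 : p ≤ 1) {E S : Finset α} (hS : S ⊆ E)
    (m : α → ℝ) (hm0 : ∀ e, 0 ≤ m e) (hm2 : ∀ e, m e ≤ 2) (t : ℝ) (ht : |t| ≤ 1 / 2) :
    ∑ T ∈ E.powerset with S ⊆ T, bernWeight p E T * Real.exp (t * ∑ e ∈ T \ S, m e)
      ≤ p ^ S.card * Real.exp (p * (t + 2 * t ^ 2) * ∑ e ∈ E \ S, m e) := by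
  have h := sum_bernWeight_mul_prod p hS (fun e => Real.exp (t * m e))
  have e1 : ∀ T : Finset α, Real.exp (t * ∑ e ∈ T \ S, m e) = ∏ e ∈ T \ S, Real.exp (t * m e) := by
    intro T; rw [Finset.mul_sum, Real.exp_sum]
  simp only [e1]
  rw [h, Finset.mul_sum, Real.exp_sum]
  have hp1 : 0 ≤ 1 - p := by linarith
  gcongr with e he
  · have hm := hm0 e
    have hx : |t * m e| ≤ 1 := by
      rw [abs_mul, abs_of_nonneg hm]
      have := hm2 e
      nlinarith [abs_nonneg t]
    have h2 := (abs_le.1 (Real.abs_exp_sub_one_sub_id_le hx)).2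
    have h3 : (t * m e) ^ 2 ≤ 2 * t ^ 2 * m e := by
      have : m e * m e ≤ 2 * m e := mul_le_mul_of_nonneg_right (hm2 e) hm
      nlinarith [sq_nonneg t]
    have h4 : p * Real.exp (t * m e) ≤ p * (1 + t * m e + 2 * t ^ 2 * m e) := by
      gcongr; linarith
    calc p * Real.exp (t * m e) + (1 - p) ≤ p * (t + 2 * t ^ 2) * m e + 1 := by linarith
      _ ≤ _ := Real.add_one_le_exp _

/-- Upper tail of a weighted count outside `S`, on the event that the random set contains `S`. -/
lemma bernProb_upper_tail {p : ℝ} (h0 : 0 ≤ p) (h1 : p ≤ 1) {E S : Finset α} (hS : S ⊆ E)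
    (m : α → ℝ) (hm0 : ∀ e, 0 ≤ m e) (hm2 : ∀ e, m e ≤ 2) (t M d : ℝ) (ht0 : 0 ≤ t)
    (ht : t ≤ 1 / 2) (hM : ∑ e ∈ E, m e ≤ M) :
    bernProb p E (fun T => S ⊆ T ∧ p * ∑ e ∈ E, m e + d ≤ ∑ e ∈ T \ S, m e)
      ≤ p ^ S.card * Real.exp (2 * t ^ 2 * p * M - t * d) := by
  have h := sum_bernWeight_exp_le h0 h1 hS m hm0 hm2 t (by rw [abs_of_nonneg ht0]; exact ht)
  set W := ∑ e ∈ E, m e with hW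
  have hES : ∑ e ∈ E \ S, m e ≤ W :=
    Finset.sum_le_sum_of_subset_of_nonneg Finset.sdiff_subset fun e _ _ => hm0 e
  have key : bernProb p E (fun T => S ⊆ T ∧ p * W + d ≤ ∑ e ∈ T \ S, m e)
      * Real.exp (t * (p * W + d)) ≤
      ∑ T ∈ E.powerset with S ⊆ T, bernWeight p E T * Real.exp (t * ∑ e ∈ T \ S, m e) := by
    unfold bernProb
    rw [Finset.sum_mul]
    refine le_trans (Finset.sum_le_sum (g := fun T => bernWeight p E T *
      Real.exp (t * ∑ e ∈ T \ S, m e)) ?_) ?_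
    · intro T hT
      simp only [Finset.mem_filter] at hT
      have h3 := hT.2.2
      have := bernWeight_nonneg h0 h1 E T
      gcongr
    · apply Finset.sum_le_sum_of_subset_of_nonneg
      · intro T hT
        simp only [Finset.mem_filter] at hT ⊢
        exact ⟨hT.1, hT.2.1⟩
      · intros
        exact mul_nonneg (bernWeight_nonneg h0 h1 _ _) (Real.exp_pos _).le
  have h5 := key.trans h
  rw [← le_div_iff₀ (Real.exp_pos _), mul_div_assoc, ← Real.exp_sub] at h5
  refine h5.trans (mul_le_mul_of_nonneg_left (Real.exp_le_exp.2 ?_) (by positivity))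
  have a1 : p * (t + 2 * t ^ 2) * ∑ e ∈ E \ S, m e ≤ p * (t + 2 * t ^ 2) * W := by gcongr
  have a2 : p * (2 * t ^ 2) * W ≤ p * (2 * t ^ 2) * M := by gcongr
  nlinarith

lemma bernProb_lower_tail {p : ℝ} (h0 : 0 ≤ p) (h1 : p ≤ 1) {E : Finset α}
    (m : α → ℝ) (hm0 : ∀ e, 0 ≤ m e) (hm2 : ∀ e, m e ≤ 2) (t M d : ℝ) (ht0 : 0 ≤ t)
    (ht : t ≤ 1 / 2) (hM : ∑ e ∈ E, m e ≤ M) :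
    bernProb p E (fun T => ∑ e ∈ T, m e ≤ p * ∑ e ∈ E, m e - d)
      ≤ Real.exp (2 * t ^ 2 * p * M - t * d) := by
  have h := sum_bernWeight_exp_le h0 h1 (Finset.empty_subset E) m hm0 hm2 (-t)
    (by rw [abs_neg, abs_of_nonneg ht0]; exact ht)
  simp only [Finset.sdiff_empty, Finset.empty_subset, Finset.filter_true, Finset.card_empty,
    pow_zero, one_mul] at h
  set W := ∑ e ∈ E, m e with hW
  have key : bernProb p E (fun T => ∑ e ∈ T, m e ≤ p * W - d)
      * Real.exp (-t * (p * W - d)) ≤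
      ∑ T ∈ E.powerset, bernWeight p E T * Real.exp (-t * ∑ e ∈ T, m e) := by
    unfold bernProb
    rw [Finset.sum_mul]
    refine le_trans (Finset.sum_le_sum (g := fun T => bernWeight p E T *
      Real.exp (-t * ∑ e ∈ T, m e)) ?_) ?_
    · intro T hT
      simp only [Finset.mem_filter] at hT
      have h3 := hT.2
      have := bernWeight_nonneg h0 h1 E T
      have h4 : -t * (p * W - d) ≤ -t * ∑ e ∈ T, m e := by
        nlinarith
      gcongr
    · apply Finset.sum_le_sum_of_subset_of_nonneg (Finset.filter_subset _ _)
      intros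
      exact mul_nonneg (bernWeight_nonneg h0 h1 _ _) (Real.exp_pos _).le
  have h5 := key.trans h
  rw [← le_div_iff₀ (Real.exp_pos _), ← Real.exp_sub] at h5
  refine h5.trans (Real.exp_le_exp.2 ?_)
  have a2 : p * (2 * t ^ 2) * W ≤ p * (2 * t ^ 2) * M := by gcongr
  nlinarith

/-- The expected number of subsets of size at most `m` of a `p`-random subset of `E`, bounded by
comparison with an `ηp`-random subset. -/
lemma sum_pow_card_le {p η : ℝ} (h0 : 0 ≤ p) (hη : 0 < η) (hη1 : η ≤ 1) (E : Finset α) (m : ℝ) :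
    ∑ S ∈ E.powerset with (S.card : ℝ) ≤ m, p ^ S.card
      ≤ Real.exp (m * Real.log (1 / η) + η * p * E.card) := by
  have hlog : 0 ≤ Real.log (1 / η) := Real.log_nonneg (by rw [le_div_iff₀ hη]; linarith)
  have h1 : ∀ S : Finset α, (S.card : ℝ) ≤ m →
      p ^ S.card ≤ Real.exp (m * Real.log (1 / η)) * (η * p) ^ S.card := by
    intro S hS
    have h2 : (1 / η) ^ S.card ≤ Real.exp (m * Real.log (1 / η)) := by
      rw [← Real.exp_log (show 0 < (1 / η) ^ S.card by positivity), Real.log_pow]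
      gcongr
    calc p ^ S.card = (1 / η) ^ S.card * (η * p) ^ S.card := by
          rw [← mul_pow]; congr 1; field_simp
      _ ≤ _ := by gcongr
  calc ∑ S ∈ E.powerset with (S.card : ℝ) ≤ m, p ^ S.card
      ≤ ∑ S ∈ E.powerset with (S.card : ℝ) ≤ m,
          Real.exp (m * Real.log (1 / η)) * (η * p) ^ S.card := by
        apply Finset.sum_le_sum
        intro S hS
        exact h1 S (Finset.mem_filter.1 hS).2
    _ ≤ ∑ S ∈ E.powerset, Real.exp (m * Real.log (1 / η)) * (η * p) ^ S.card := by
        apply Finset.sum_le_sum_of_subset_of_nonneg (Finset.filter_subset _ _)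
        intros; positivity
    _ = Real.exp (m * Real.log (1 / η)) * (1 + η * p) ^ E.card := by
        rw [← Finset.mul_sum]
        congr 1
        have := Finset.prod_one_add (f := fun _ : α => η * p) E
        simpa using this.symm
    _ ≤ Real.exp (m * Real.log (1 / η)) * Real.exp (η * p * E.card) := by
        gcongr
        rw [mul_comm (η * p), Real.exp_nat_mul]
        gcongr
        linarith [Real.add_one_le_exp (η * p)]
    _ = _ := by rw [← Real.exp_add]

end Bernoulli

/-! ### Edge counts in random graphs -/

section PairCount

variable {V : Type*}

/-- Number of ordered pairs in `Q` whose underlying edge lies in `T`. -/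
noncomputable def pairCount (T : Finset (Sym2 V)) (Q : Finset (V × V)) : ℕ :=
  (Q.filter fun z => s(z.1, z.2) ∈ T).card

/-- Number of ordered pairs in `Q` whose underlying edge lies in `T` but not in `S`. -/
noncomputable def pairCountOut (T S : Finset (Sym2 V)) (Q : Finset (V × V)) : ℕ :=
  (Q.filter fun z => s(z.1, z.2) ∈ T ∧ s(z.1, z.2) ∉ S).card

/-- Number of ordered pairs in `Q` with underlying edge `e`. -/
noncomputable def pairMult (Q : Finset (V × V)) (e : Sym2 V) : ℝ :=
  (Q.filter fun z => s(z.1, z.2) = e).card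

lemma sum_pairMult (T : Finset (Sym2 V)) (Q : Finset (V × V)) :
    ∑ e ∈ T, pairMult Q e = pairCount T Q := by
  unfold pairMult pairCount
  rw [Finset.card_eq_sum_card_fiberwise (f := fun z : V × V => s(z.1, z.2)) (t := T)]
  · push_cast
    apply Finset.sum_congr rfl
    intro e he
    congr 2
    ext z
    simp only [Finset.mem_filter]
    constructor
    · rintro ⟨h1, h2⟩; exact ⟨⟨h1, h2 ▸ he⟩, h2⟩
    · rintro ⟨⟨h1, _⟩, h2⟩; exact ⟨h1, h2⟩
  · intro z hz
    simpa using (Finset.mem_filter.1 hz).2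

lemma pairMult_nonneg (Q : Finset (V × V)) (e : Sym2 V) : 0 ≤ pairMult Q e := Nat.cast_nonneg _

lemma pairMult_le_two (Q : Finset (V × V)) (e : Sym2 V) : pairMult Q e ≤ 2 := by
  unfold pairMult
  induction e with
  | h a b =>
    have : (Q.filter fun z => s(z.1, z.2) = s(a, b)) ⊆ {(a, b), (b, a)} := by
      intro z hz
      have := (Finset.mem_filter.1 hz).2
      rw [Sym2.eq_iff] at this
      simp only [Finset.mem_insert, Finset.mem_singleton, Prod.ext_iff]
      exact this
    have h2 := (Finset.card_le_card this).trans Finset.card_le_two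
    exact_mod_cast h2

lemma pairCount_le_card (T : Finset (Sym2 V)) (Q : Finset (V × V)) :
    pairCount T Q ≤ Q.card := Finset.card_filter_le _ _

lemma pairCount_le_two_mul (T : Finset (Sym2 V)) (Q : Finset (V × V)) :
    pairCount T Q ≤ 2 * T.card := by
  have h : (pairCount T Q : ℝ) ≤ 2 * T.card := by
    rw [← sum_pairMult]
    calc ∑ e ∈ T, pairMult Q e ≤ ∑ _e ∈ T, (2 : ℝ) :=
          Finset.sum_le_sum fun e _ => pairMult_le_two Q e
      _ = _ := by simp; ring
  exact_mod_cast h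

lemma pairCount_mono {T T' : Finset (Sym2 V)} (h : T ⊆ T') (Q : Finset (V × V)) :
    pairCount T Q ≤ pairCount T' Q :=
  Finset.card_le_card (Finset.monotone_filter_right _ fun _ _ hz => h hz)

lemma pairCount_le_out_add (T S : Finset (Sym2 V)) (Q : Finset (V × V)) :
    pairCount T Q ≤ pairCountOut T S Q + pairCount S Q := by
  unfold pairCount pairCountOut
  refine (Finset.card_le_card ?_).trans (Finset.card_union_le _ _)
  intro z hz
  simp only [Finset.mem_filter, Finset.mem_union] at hz ⊢
  by_cases h : s(z.1, z.2) ∈ S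
  · exact Or.inr ⟨hz.1, h⟩
  · exact Or.inl ⟨hz.1, hz.2, h⟩

lemma pairCount_univ [Fintype V] {T : Finset (Sym2 V)} (hT : ∀ e ∈ T, ¬ e.IsDiag) :
    pairCount T Finset.univ = 2 * T.card := by
  have h : (pairCount T Finset.univ : ℝ) = 2 * T.card := by
    rw [← sum_pairMult]
    calc ∑ e ∈ T, pairMult Finset.univ e = ∑ _e ∈ T, (2 : ℝ) := by
          apply Finset.sum_congr rfl
          intro e he
          have hd := hT e he
          unfold pairMult
          induction e with
          | h a b =>
            rw [Sym2.mk_isDiag_iff] at hd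
            have : (Finset.univ.filter fun z : V × V => s(z.1, z.2) = s(a, b))
                = {(a, b), (b, a)} := by
              ext z
              simp only [Finset.mem_filter, Finset.mem_univ, true_and, Sym2.eq_iff,
                Finset.mem_insert, Finset.mem_singleton, Prod.ext_iff]
            rw [this, Finset.card_pair (by simp [Prod.ext_iff]; intro h; exact absurd h hd)]
            norm_num
      _ = _ := by simp; ring
  exact_mod_cast h

lemma bernProb_pairCountOut_le {p : ℝ} (h0 : 0 ≤ p) (h1 : p ≤ 1) {E S : Finset (Sym2 V)}
    (hS : S ⊆ E) (Q : Finset (V × V)) (t M d : ℝ) (ht0 : 0 ≤ t) (ht : t ≤ 1 / 2)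
    (hM : pairCount E Q ≤ M) :
    bernProb p E (fun T => S ⊆ T ∧ p * pairCount E Q + d ≤ pairCountOut T S Q)
      ≤ p ^ S.card * Real.exp (2 * t ^ 2 * p * M - t * d) := by
  rw [← sum_pairMult] at hM
  refine le_trans (le_of_eq ?_) (bernProb_upper_tail h0 h1 hS (pairMult Q) (pairMult_nonneg Q)
    (pairMult_le_two Q) t M d ht0 ht hM)
  congr 1
  funext T
  rw [sum_pairMult, sum_pairMult]
  have : pairCountOut T S Q = pairCount (T \ S) Q := by
    unfold pairCountOut pairCount
    congr 1
    ext z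
    simp
  rw [this]
  congr!

lemma bernProb_pairCount_upper {p : ℝ} (h0 : 0 ≤ p) (h1 : p ≤ 1) (E : Finset (Sym2 V))
    (Q : Finset (V × V)) (t M d : ℝ) (ht0 : 0 ≤ t) (ht : t ≤ 1 / 2)
    (hM : pairCount E Q ≤ M) :
    bernProb p E (fun T => p * pairCount E Q + d ≤ pairCount T Q)
      ≤ Real.exp (2 * t ^ 2 * p * M - t * d) := by
  have := bernProb_pairCountOut_le h0 h1 (Finset.empty_subset E) Q t M d ht0 ht hM
  simpa [pairCountOut, pairCount] using this

lemma bernProb_pairCount_lower {p : ℝ} (h0 : 0 ≤ p) (h1 : p ≤ 1) (E : Finset (Sym2 V))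
    (Q : Finset (V × V)) (t M d : ℝ) (ht0 : 0 ≤ t) (ht : t ≤ 1 / 2)
    (hM : pairCount E Q ≤ M) :
    bernProb p E (fun T => (pairCount T Q : ℝ) ≤ p * pairCount E Q - d)
      ≤ Real.exp (2 * t ^ 2 * p * M - t * d) := by
  rw [← sum_pairMult] at hM
  have := bernProb_lower_tail h0 h1 (E := E) (pairMult Q) (pairMult_nonneg Q)
    (pairMult_le_two Q) t M d ht0 ht hM
  simpa only [sum_pairMult] using this

variable [Fintype V]

/-- Simultaneous upper bound over all small subsets `S` of the random edge set, where the pair set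
tested against the edges outside `S` may depend on `S`. The union bound costs `p ^ |S|` per
candidate `S`, which is what pays for the sum over all `S`. -/
lemma bernProb_exists_sample_le {ι : Type*} {p η : ℝ} (h0 : 0 ≤ p) (h1 : p ≤ 1) (hη : 0 < η)
    (hη1 : η ≤ 1) (E : Finset (Sym2 V)) (I : Finset ι)
    (Qf : Finset (Sym2 V) → ι → Finset (V × V)) (m t M d : ℝ) (ht0 : 0 ≤ t) (ht : t ≤ 1 / 2)
    (hM : (Fintype.card V : ℝ) ^ 2 ≤ M) :
    bernProb p E (fun T => ∃ S ⊆ T, (S.card : ℝ) ≤ m ∧ ∃ i ∈ I,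
        p * (Qf S i).card + d ≤ pairCountOut T S (Qf S i))
      ≤ I.card * Real.exp (m * Real.log (1 / η) + η * p * E.card + (2 * t ^ 2 * p * M - t * d)) := by
  have hQ : ∀ Q : Finset (V × V), (pairCount E Q : ℝ) ≤ M := by
    intro Q
    refine le_trans ?_ hM
    have h2 := (pairCount_le_card E Q).trans (Finset.card_le_univ Q)
    rw [Fintype.card_prod, ← pow_two] at h2
    exact_mod_cast h2
  have hsub : bernProb p E (fun T => ∃ S ⊆ T, (S.card : ℝ) ≤ m ∧ ∃ i ∈ I,
        p * (Qf S i).card + d ≤ pairCountOut T S (Qf S i)) ≤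
      bernProb p E (fun T => ∃ q ∈ (E.powerset.filter fun S => (S.card : ℝ) ≤ m) ×ˢ I,
        q.1 ⊆ T ∧ p * pairCount E (Qf q.1 q.2) + d ≤ pairCountOut T q.1 (Qf q.1 q.2)) := by
    apply bernProb_mono h0 h1
    rintro T hT ⟨S, hS, hm, i, hi, h⟩
    refine ⟨(S, i), ?_, hS, le_trans ?_ h⟩
    · simp only [Finset.mem_product, Finset.mem_filter, Finset.mem_powerset]
      exact ⟨⟨hS.trans hT, hm⟩, hi⟩
    · have := pairCount_le_card E (Qf S i)
      gcongr
  refine hsub.trans ((bernProb_exists h0 h1 E _ _).trans ?_)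
  set c := Real.exp (2 * t ^ 2 * p * M - t * d) with hc
  calc _ ≤ ∑ q ∈ (E.powerset.filter fun S => (S.card : ℝ) ≤ m) ×ˢ I, p ^ q.1.card * c := by
        apply Finset.sum_le_sum
        intro q hq
        simp only [Finset.mem_product, Finset.mem_filter, Finset.mem_powerset] at hq
        exact bernProb_pairCountOut_le h0 h1 hq.1.1 _ t M d ht0 ht (hQ _)
    _ = I.card * ((∑ S ∈ E.powerset with (S.card : ℝ) ≤ m, p ^ S.card) * c) := by
        rw [Finset.sum_product, Finset.sum_mul, Finset.mul_sum]
        apply Finset.sum_congr rfl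
        intro S _
        simp
    _ ≤ I.card * (Real.exp (m * Real.log (1 / η) + η * p * E.card) * c) := by
        gcongr
        exact sum_pow_card_le h0 hη hη1 E m
    _ = _ := by rw [hc, ← Real.exp_add]

lemma bernProb_exists_rect_upper {p : ℝ} (h0 : 0 ≤ p) (h1 : p ≤ 1) (E : Finset (Sym2 V))
    (t M d : ℝ) (ht0 : 0 ≤ t) (ht : t ≤ 1 / 2) (hM : pairCount E Finset.univ ≤ M) :
    bernProb p E (fun T => ∃ A B : Finset V,
        p * pairCount E (A ×ˢ B) + d ≤ pairCount T (A ×ˢ B))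
      ≤ 4 ^ Fintype.card V * Real.exp (2 * t ^ 2 * p * M - t * d) := by
  refine le_trans (bernProb_mono h0 h1 E (Q := fun T => ∃ q ∈ (Finset.univ : Finset
    (Finset V × Finset V)), p * pairCount E (q.1 ×ˢ q.2) + d ≤ pairCount T (q.1 ×ˢ q.2)) ?_)
    ((bernProb_exists h0 h1 E _ _).trans ?_)
  · rintro T _ ⟨A, B, h⟩
    exact ⟨(A, B), Finset.mem_univ _, h⟩
  · refine (Finset.sum_le_card_nsmul _ _ _ fun q _ => bernProb_pairCount_upper h0 h1 E
      (q.1 ×ˢ q.2) t M d ht0 ht (le_trans ?_ hM)).trans (le_of_eq ?_)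
    · exact_mod_cast Finset.card_le_card (Finset.filter_subset_filter _ (Finset.subset_univ _))
    · rw [nsmul_eq_mul, Finset.card_univ, Fintype.card_prod, Fintype.card_finset, ← mul_pow]
      norm_num

lemma bernProb_exists_rect_lower {p : ℝ} (h0 : 0 ≤ p) (h1 : p ≤ 1) (E : Finset (Sym2 V))
    (t M d : ℝ) (ht0 : 0 ≤ t) (ht : t ≤ 1 / 2) (hM : pairCount E Finset.univ ≤ M) :
    bernProb p E (fun T => ∃ A B : Finset V,
        (pairCount T (A ×ˢ B) : ℝ) ≤ p * pairCount E (A ×ˢ B) - d)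
      ≤ 4 ^ Fintype.card V * Real.exp (2 * t ^ 2 * p * M - t * d) := by
  refine le_trans (bernProb_mono h0 h1 E (Q := fun T => ∃ q ∈ (Finset.univ : Finset
    (Finset V × Finset V)), (pairCount T (q.1 ×ˢ q.2) : ℝ) ≤
      p * pairCount E (q.1 ×ˢ q.2) - d) ?_)
    ((bernProb_exists h0 h1 E _ _).trans ?_)
  · rintro T _ ⟨A, B, h⟩
    exact ⟨(A, B), Finset.mem_univ _, h⟩
  · refine (Finset.sum_le_card_nsmul _ _ _ fun q _ => bernProb_pairCount_lower h0 h1 E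
      (q.1 ×ˢ q.2) t M d ht0 ht (le_trans ?_ hM)).trans (le_of_eq ?_)
    · exact_mod_cast Finset.card_le_card (Finset.filter_subset_filter _ (Finset.subset_univ _))
    · rw [nsmul_eq_mul, Finset.card_univ, Fintype.card_prod, Fintype.card_finset, ← mul_pow]
      norm_num

/-- A graph has a sparse subset of edges of density `η` that reproduces all its rectangle counts up
to the factor `η` and a small error. -/
lemma exists_sample {η : ℝ} (h0 : 0 ≤ η) (h1 : η ≤ 1) (E : Finset (Sym2 V))
    (t M d : ℝ) (ht0 : 0 ≤ t) (ht : t ≤ 1 / 2) (hM : pairCount E Finset.univ ≤ M)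
    (hsmall : 2 * (4 ^ Fintype.card V * Real.exp (2 * t ^ 2 * η * M - t * d)) < 1) :
    ∃ S ⊆ E, ∀ A B : Finset V,
      (pairCount S (A ×ˢ B) : ℝ) ≤ η * pairCount E (A ×ˢ B) + d ∧
      η * pairCount E (A ×ˢ B) - d ≤ pairCount S (A ×ˢ B) := by
  by_contra hcon
  push Not at hcon
  have hle : bernProb η E (fun _ => True) ≤ _ :=
    (bernProb_mono h0 h1 E (Q := fun T =>
      (∃ A B : Finset V, η * pairCount E (A ×ˢ B) + d ≤ pairCount T (A ×ˢ B)) ∨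
      (∃ A B : Finset V, (pairCount T (A ×ˢ B) : ℝ) ≤ η * pairCount E (A ×ˢ B) - d)) (by
      intro T hT _
      obtain ⟨A, B, h⟩ := hcon T hT
      by_cases hu : (pairCount T (A ×ˢ B) : ℝ) ≤ η * pairCount E (A ×ˢ B) + d
      · exact Or.inr ⟨A, B, (h hu).le⟩
      · exact Or.inl ⟨A, B, (not_le.1 hu).le⟩)).trans (bernProb_or h0 h1 E _ _)
  have hone : bernProb η E (fun _ => True) = 1 := by
    unfold bernProb
    simpa using sum_bernWeight η E
  have h2 := bernProb_exists_rect_upper h0 h1 E t M d ht0 ht hM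
  have h3 := bernProb_exists_rect_lower h0 h1 E t M d ht0 ht hM
  linarith

end PairCount

/-! ### Codegrees and the second moment -/

section FourCount

variable {V : Type*} [Fintype V]

/-- Sum over ordered pairs of vertices of the squared codegree, which counts homomorphic images of
the four-cycle. -/
noncomputable def fourCount (T : Finset (Sym2 V)) : ℝ :=
  ∑ y, ∑ y', (∑ x, if s(x, y) ∈ T ∧ s(x, y') ∈ T then (1 : ℝ) else 0) ^ 2

lemma fourCount_nonneg (T : Finset (Sym2 V)) : 0 ≤ fourCount T :=
  Finset.sum_nonneg fun _ _ => Finset.sum_nonneg fun _ _ => sq_nonneg _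

lemma fourCount_mono {T T' : Finset (Sym2 V)} (h : T ⊆ T') : fourCount T ≤ fourCount T' := by
  unfold fourCount
  refine Finset.sum_le_sum fun y _ => Finset.sum_le_sum fun y' _ => ?_
  have h0 : 0 ≤ ∑ x, if s(x, y) ∈ T ∧ s(x, y') ∈ T then (1 : ℝ) else 0 :=
    Finset.sum_nonneg fun x _ => by split_ifs <;> norm_num
  gcongr with x
  by_cases hx : s(x, y) ∈ T ∧ s(x, y') ∈ T
  · rw [if_pos hx, if_pos ⟨h hx.1, h hx.2⟩]
  · rw [if_neg hx]; split_ifs <;> norm_num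

/-- The edges of the closed walk `x y x' y'`. -/
noncomputable def fourEdges (y y' x x' : V) : Finset (Sym2 V) :=
  {s(x, y), s(x, y'), s(x', y), s(x', y')}

lemma fourCount_eq (T : Finset (Sym2 V)) :
    fourCount T = ∑ y, ∑ y', ∑ x, ∑ x', if fourEdges y y' x x' ⊆ T then (1 : ℝ) else 0 := by
  unfold fourCount
  refine Finset.sum_congr rfl fun y _ => Finset.sum_congr rfl fun y' _ => ?_
  rw [pow_two, Finset.sum_mul_sum]
  refine Finset.sum_congr rfl fun x _ => Finset.sum_congr rfl fun x' _ => ?_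
  have : fourEdges y y' x x' ⊆ T ↔
      (s(x, y) ∈ T ∧ s(x, y') ∈ T) ∧ (s(x', y) ∈ T ∧ s(x', y') ∈ T) := by
    simp [fourEdges, Finset.insert_subset_iff, and_assoc]
  by_cases h1 : s(x, y) ∈ T ∧ s(x, y') ∈ T <;> by_cases h2 : s(x', y) ∈ T ∧ s(x', y') ∈ T <;>
    simp [this, h1, h2]

lemma pow_card_fourEdges_le {V : Type*} {p : ℝ} (h0 : 0 ≤ p) (y y' x x' : V)
    (hd : ∀ e ∈ fourEdges y y' x x', ¬ e.IsDiag) :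
    p ^ (fourEdges y y' x x').card ≤ p ^ 4 + (if x = x' then p ^ 2 else 0) +
      (if y = y' then p ^ 2 else 0) + (if x = x' then if y = y' then p else 0 else 0) := by
  have d1 : x ≠ y := by simpa using hd s(x, y) (by simp [fourEdges])
  have d2 : x ≠ y' := by simpa using hd s(x, y') (by simp [fourEdges])
  have d3 : x' ≠ y := by simpa using hd s(x', y) (by simp [fourEdges])
  have d4 : x' ≠ y' := by simpa using hd s(x', y') (by simp [fourEdges])
  by_cases hx : x = x' <;> by_cases hy : y = y'
  · subst hx; subst hy
    have : (fourEdges y y x x).card = 1 := by simp [fourEdges]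
    rw [this]
    simp only [if_true, pow_one]
    nlinarith [pow_nonneg h0 4, pow_nonneg h0 2]
  · subst hx
    have : (fourEdges y y' x x) = {s(x, y), s(x, y')} := by
      ext e; simp [fourEdges]
    rw [this, Finset.card_pair (by simp only [ne_eq, Sym2.eq_iff]; grind)]
    simp only [if_true, hy, if_false, add_zero]
    linarith [pow_nonneg h0 4]
  · subst hy
    have : (fourEdges y y x x') = {s(x, y), s(x', y)} := by
      ext e; simp [fourEdges]
    rw [this, Finset.card_pair (by simp only [ne_eq, Sym2.eq_iff]; grind)]
    simp only [if_true, hx, if_false, add_zero]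
    linarith [pow_nonneg h0 4]
  · have : (fourEdges y y' x x').card = 4 := by
      unfold fourEdges
      rw [Finset.card_insert_of_notMem, Finset.card_insert_of_notMem,
        Finset.card_pair]
      · simp only [ne_eq, Sym2.eq_iff]
        grind
      · simp only [Finset.mem_insert, Finset.mem_singleton, Sym2.eq_iff]
        grind
      · simp only [Finset.mem_insert, Finset.mem_singleton, Sym2.eq_iff]
        grind
    rw [this]
    simp [hx, hy]

lemma sum_bernWeight_fourCount_le {p : ℝ} (h0 : 0 ≤ p) {E : Finset (Sym2 V)}
    (hE : ∀ e ∈ E, ¬ e.IsDiag) :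
    ∑ T ∈ E.powerset, bernWeight p E T * fourCount T ≤
      (Fintype.card V : ℝ) ^ 4 * p ^ 4 + 2 * (Fintype.card V : ℝ) ^ 3 * p ^ 2 +
        (Fintype.card V : ℝ) ^ 2 * p := by
  have e1 : ∑ T ∈ E.powerset, bernWeight p E T * fourCount T = ∑ y, ∑ y', ∑ x, ∑ x',
      ∑ T ∈ E.powerset with fourEdges y y' x x' ⊆ T, bernWeight p E T := by
    simp only [fourCount_eq, Finset.mul_sum, mul_ite, mul_one, mul_zero, Finset.sum_filter]
    rw [Finset.sum_comm]
    refine Finset.sum_congr rfl fun y _ => ?_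
    rw [Finset.sum_comm]
    refine Finset.sum_congr rfl fun y' _ => ?_
    rw [Finset.sum_comm]
    refine Finset.sum_congr rfl fun x _ => ?_
    rw [Finset.sum_comm]
  rw [e1]
  calc _ ≤ ∑ y : V, ∑ y' : V, ∑ x : V, ∑ x' : V, (p ^ 4 + (if x = x' then p ^ 2 else 0) +
      (if y = y' then p ^ 2 else 0) + (if x = x' then if y = y' then p else 0 else 0)) := by
        refine Finset.sum_le_sum fun y _ => Finset.sum_le_sum fun y' _ => Finset.sum_le_sum
          fun x _ => Finset.sum_le_sum fun x' _ => ?_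
        by_cases hS : fourEdges y y' x x' ⊆ E
        · refine le_trans (le_of_eq ?_) (pow_card_fourEdges_le h0 y y' x x' fun e he => hE e (hS he))
          rw [← sum_bernWeight_superset p hS]
          congr!
        · rw [Finset.sum_eq_zero]
          · have := pow_nonneg h0 4
            have := pow_nonneg h0 2
            split_ifs <;> positivity
          · intro T hT
            simp only [Finset.mem_filter, Finset.mem_powerset] at hT
            exact absurd (hT.2.trans hT.1) hS
    _ = _ := by
        simp only [Finset.sum_add_distrib, Finset.sum_const, Finset.card_univ, nsmul_eq_mul,
          Finset.sum_ite_eq, Finset.mem_univ, if_true]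
        ring_nf
        simp only [← Finset.mul_sum, Finset.sum_const, Finset.card_univ,
          nsmul_eq_mul, Finset.sum_ite_eq, Finset.mem_univ, if_true, mul_ite, mul_zero]
        ring

/-- Markov's inequality for the number of four-cycles, in the range where the nondegenerate ones
dominate. -/
lemma bernProb_fourCount_le {p K : ℝ} (h0 : 0 < p) (h1 : p ≤ 1) {E : Finset (Sym2 V)}
    (hE : ∀ e ∈ E, ¬ e.IsDiag) (hK : 0 < K) (hp : 1 ≤ (Fintype.card V : ℝ) * p ^ 2) :
    bernProb p E (fun T => K * p ^ 4 * (Fintype.card V : ℝ) ^ 4 ≤ fourCount T) ≤ 4 / K := by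
  set n : ℝ := (Fintype.card V : ℝ) with hn
  have hn0 : 0 < n := by
    by_contra h
    have : n * p ^ 2 ≤ 0 := mul_nonpos_of_nonpos_of_nonneg (not_lt.1 h) (by positivity)
    linarith
  have hexp := sum_bernWeight_fourCount_le h0.le hE
  rw [← hn] at hexp
  have hnp : 1 ≤ n * p := by nlinarith
  have a1 : n ^ 3 * p ^ 2 ≤ n ^ 4 * p ^ 4 := by
    have : n ^ 3 * p ^ 2 * 1 ≤ n ^ 3 * p ^ 2 * (n * p ^ 2) := by gcongr
    nlinarith
  have a2 : n ^ 2 * p ≤ n ^ 3 * p ^ 2 := by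
    have : n ^ 2 * p * 1 ≤ n ^ 2 * p * (n * p) := by gcongr
    nlinarith
  have hmk : bernProb p E (fun T => K * p ^ 4 * n ^ 4 ≤ fourCount T) * (K * p ^ 4 * n ^ 4) ≤
      ∑ T ∈ E.powerset, bernWeight p E T * fourCount T := by
    unfold bernProb
    rw [Finset.sum_mul]
    refine le_trans (Finset.sum_le_sum (g := fun T => bernWeight p E T * fourCount T) ?_) ?_
    · intro T hT
      simp only [Finset.mem_filter] at hT
      have := bernWeight_nonneg h0.le h1 E T
      have := hT.2
      gcongr
    · apply Finset.sum_le_sum_of_subset_of_nonneg (Finset.filter_subset _ _)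
      intros
      exact mul_nonneg (bernWeight_nonneg h0.le h1 _ _) (fourCount_nonneg _)
  rw [le_div_iff₀ hK]
  have hpos : 0 < p ^ 4 * n ^ 4 := by positivity
  have : bernProb p E (fun T => K * p ^ 4 * n ^ 4 ≤ fourCount T) * K * (p ^ 4 * n ^ 4) ≤
      4 * (p ^ 4 * n ^ 4) := by nlinarith
  exact le_of_mul_le_mul_right this hpos

/-- The twisted second moment is bounded by the untwisted one: after expanding the square, the two
codegrees that appear differ by a shift, and `ab ≤ (a² + b²) / 2`. -/
lemma twisted_le {n : ℕ} [NeZero n] (f : ZMod n → ZMod n → ℝ) :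
    ∑ x, ∑ x', (∑ y, f x y * f (x' + 1) (y + 1)) ^ 2 ≤
      ∑ y, ∑ y', (∑ x, f x y * f x y') ^ 2 := by
  set cd : ZMod n → ZMod n → ℝ := fun y y' => ∑ x, f x y * f x y' with hcd
  have hshift : ∀ y y' : ZMod n, ∑ x', f (x' + 1) (y + 1) * f (x' + 1) (y' + 1)
      = cd (y + 1) (y' + 1) := fun y y' =>
    Equiv.sum_comp (Equiv.addRight (1 : ZMod n)) fun z => f z (y + 1) * f z (y' + 1)
  have e1 : ∑ x, ∑ x', (∑ y, f x y * f (x' + 1) (y + 1)) ^ 2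
      = ∑ y, ∑ y', cd y y' * cd (y + 1) (y' + 1) := by
    have e2 : ∀ y y' : ZMod n, cd y y' * cd (y + 1) (y' + 1) = ∑ x, ∑ x',
        (f x y * f (x' + 1) (y + 1)) * (f x y' * f (x' + 1) (y' + 1)) := by
      intro y y'
      rw [← hshift, hcd, Finset.sum_mul_sum]
      refine Finset.sum_congr rfl fun x _ => Finset.sum_congr rfl fun x' _ => ?_
      ring
    simp only [e2, pow_two, Finset.sum_mul_sum]
    calc _ = ∑ x, ∑ y, ∑ x', ∑ y', (f x y * f (x' + 1) (y + 1)) *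
          (f x y' * f (x' + 1) (y' + 1)) :=
          Finset.sum_congr rfl fun x _ => Finset.sum_comm
      _ = ∑ x, ∑ y, ∑ y', ∑ x', (f x y * f (x' + 1) (y + 1)) *
          (f x y' * f (x' + 1) (y' + 1)) :=
          Finset.sum_congr rfl fun x _ => Finset.sum_congr rfl fun y _ => Finset.sum_comm
      _ = ∑ y, ∑ x, ∑ y', ∑ x', (f x y * f (x' + 1) (y + 1)) *
          (f x y' * f (x' + 1) (y' + 1)) := Finset.sum_comm
      _ = _ := Finset.sum_congr rfl fun y _ => Finset.sum_comm
  have e3 : ∑ y, ∑ y', cd (y + 1) (y' + 1) ^ 2 = ∑ y, ∑ y', cd y y' ^ 2 := by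
    rw [← Equiv.sum_comp (Equiv.addRight (1 : ZMod n)) fun y => ∑ y', cd y y' ^ 2]
    refine Finset.sum_congr rfl fun y _ => ?_
    exact Equiv.sum_comp (Equiv.addRight (1 : ZMod n)) fun y' => cd (y + 1) y' ^ 2
  rw [e1]
  calc ∑ y, ∑ y', cd y y' * cd (y + 1) (y' + 1)
      ≤ ∑ y, ∑ y', (cd y y' ^ 2 / 2 + cd (y + 1) (y' + 1) ^ 2 / 2) := by
        refine Finset.sum_le_sum fun y _ => Finset.sum_le_sum fun y' _ => ?_
        nlinarith [sq_nonneg (cd y y' - cd (y + 1) (y' + 1))]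
    _ = _ := by
        simp only [Finset.sum_add_distrib, ← Finset.sum_div]
        rw [e3]; ring

end FourCount

/-! ### From samples to shortcuts -/

lemma pairCount_le_pairCount {V : Type*} {T T' : Finset (Sym2 V)} {Q Q' : Finset (V × V)}
    (h : ∀ z ∈ Q, s(z.1, z.2) ∈ T → z ∈ Q' ∧ s(z.1, z.2) ∈ T') :
    pairCount T Q ≤ pairCount T' Q' := by
  unfold pairCount
  apply Finset.card_le_card
  intro z hz
  rw [Finset.mem_filter] at hz ⊢
  exact h z hz.1 hz.2

section Assembly

variable {n : ℕ} [NeZero n]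

/-- In the labeling `σ`, the edge `uv` together with three edges of `S` forms an `l`-shortcut in
which `uv` plays the role of `{i₂, i₄ + l + 1}`. -/
def Closes (S : Finset (Sym2 (ZMod n))) (σ : ZMod n ≃ ZMod n) (l : ℕ) (u v : ZMod n) : Prop :=
  ∃ i₁ i₃ i₄ : ZMod n, IsShortcutTuple l i₁ (σ u) i₃ i₄ ∧ σ v = i₄ + (l : ZMod n) + 1 ∧
    s(σ.symm i₁, σ.symm i₃) ∈ S ∧ s(σ.symm (i₁ + 1), σ.symm i₄) ∈ S ∧
    s(σ.symm (σ u + 1), σ.symm (i₃ + 1)) ∈ S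

/-- The pairs of `X × J` that do not close a shortcut with edges of `S`. -/
noncomputable def openPairs (S : Finset (Sym2 (ZMod n))) (σ : ZMod n ≃ ZMod n) (l : ℕ)
    (X J : Finset (ZMod n)) : Finset (ZMod n × ZMod n) :=
  (X ×ˢ J).filter fun z => ¬ Closes S σ l z.1 z.2

lemma mem_edgeSet_map_equiv {V : Type*} (G : SimpleGraph V) (σ : V ≃ V) (a b : V)
    (h : s(σ.symm a, σ.symm b) ∈ G.edgeSet) : s(a, b) ∈ (G.map σ.toEmbedding).edgeSet := by
  rw [SimpleGraph.mem_edgeSet, SimpleGraph.map_adj]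
  exact ⟨σ.symm a, σ.symm b, h, by simp, by simp⟩

lemma containsShortcut_of_closes {n : ℕ} {S : Finset (Sym2 (ZMod n))} {σ : ZMod n ≃ ZMod n} {l : ℕ}
    {u v : ZMod n} {G : SimpleGraph (ZMod n)} (hS : ∀ e ∈ S, e ∈ G.edgeSet)
    (huv : s(u, v) ∈ G.edgeSet) (h : Closes S σ l u v) :
    ContainsShortcut l (G.map σ.toEmbedding) := by
  obtain ⟨i₁, i₃, i₄, ht, hv, h1, h2, h3⟩ := h
  refine ⟨i₁, σ u, i₃, i₄, ht, ?_⟩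
  intro e he
  simp only [shortcutEdges, Finset.coe_insert, Finset.coe_singleton, Set.mem_insert_iff,
    Set.mem_singleton_iff] at he
  rcases he with rfl | rfl | rfl | rfl
  · exact mem_edgeSet_map_equiv G σ _ _ (hS _ h1)
  · exact mem_edgeSet_map_equiv G σ _ _ (hS _ h2)
  · apply mem_edgeSet_map_equiv G σ
    rw [← hv]; simpa using huv
  · exact mem_edgeSet_map_equiv G σ _ _ (hS _ h3)

/-- `exists_excess` for the normalised indicator of an edge set `S` of density about `q`. -/
lemma exists_excess_graph (S : Finset (Sym2 (ZMod n))) (σ : ZMod n ≃ ZMod n)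
    (q ε τ K γ ρ : ℝ) (L N l : ℕ) (hq : 0 < q)
    (hε : 0 < ε) (hε1 : ε ≤ 1) (hL : 8 / ε ≤ L) (hN : 100 ≤ ε * N) (hK0 : 0 < K)
    (hγ : γ = ε / (16 * ((L + 1) ^ 2 * N))) (hρ : ρ = ε ^ 3 * γ ^ 3 / (4096 * K))
    (hn : 8 * N ≤ n) (hγn : 6 ≤ γ * n) (hl : l ≤ n / N) (hτ0 : 0 ≤ τ)
    (hτ1 : τ ≤ ε ^ 2 * γ / 512) (hτ2 : 16 * τ * N ≤ ε * ρ)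
    (H : ∀ A B : Finset (ZMod n),
      (pairCount S (A ×ˢ B) : ℝ) ≤ q * (A.card * B.card + τ * (n : ℝ) ^ 2))
    (htot : q * ((1 / 2 + ε) * (n : ℝ) ^ 2) ≤ pairCount S Finset.univ)
    (hK : fourCount S ≤ K * q ^ 4 * (n : ℝ) ^ 4) :
    ∃ X J : Finset (ZMod n), q * ((openPairs S σ l X J).card + ε ^ 2 * γ / 512 * (n : ℝ) ^ 2) ≤
      pairCount S (X ×ˢ J) := by
  set f : ZMod n → ZMod n → ℝ := fun x y =>
    if s(σ.symm x, σ.symm y) ∈ S then q⁻¹ else 0 with hf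
  have hf0 : ∀ x y, 0 ≤ f x y := by
    intro x y
    simp only [hf]
    split_ifs <;> positivity
  have hmem : ∀ x y, f x y ≠ 0 → s(σ.symm x, σ.symm y) ∈ S := by
    intro x y h
    by_contra hc
    exact h (by simp only [hf]; rw [if_neg hc])
  have hrect : ∀ A B : Finset (ZMod n), q * rectWeight f A B =
      pairCount S ((A.map σ.symm.toEmbedding) ×ˢ (B.map σ.symm.toEmbedding)) := by
    intro A B
    unfold rectWeight pairCount
    rw [Finset.card_filter, Finset.sum_product, Finset.sum_map, Finset.mul_sum]
    push_cast
    refine Finset.sum_congr rfl fun x _ => ?_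
    rw [Finset.sum_map, Finset.mul_sum]
    refine Finset.sum_congr rfl fun y _ => ?_
    simp only [hf, Equiv.coe_toEmbedding]
    split_ifs
    · field_simp
    · simp
  obtain ⟨X, J, Q, -, hX, hcl⟩ := exists_excess f ε τ K γ ρ L N l hε hε1 hL hN hK0 hγ hρ hn hγn
    hl hτ0 hτ1 hτ2 hf0
    (by
      intro A B
      have h1 := H (A.map σ.symm.toEmbedding) (B.map σ.symm.toEmbedding)
      rw [← hrect, Finset.card_map, Finset.card_map] at h1
      exact le_of_mul_le_mul_left h1 hq)
    (by
      have h1 := hrect Finset.univ Finset.univ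
      rw [Finset.map_univ_equiv, Finset.univ_product_univ] at h1
      rw [← h1] at htot
      exact le_of_mul_le_mul_left htot hq)
    (by
      refine (twisted_le f).trans ?_
      have h1 : ∑ y, ∑ y', (∑ x, f x y * f x y') ^ 2 = (q⁻¹) ^ 4 * fourCount S := by
        unfold fourCount
        rw [Finset.mul_sum, ← Equiv.sum_comp σ.symm (fun y => _ * _)]
        refine Finset.sum_congr rfl fun y _ => ?_
        rw [Finset.mul_sum, ← Equiv.sum_comp σ.symm (fun y' => _ * _)]
        refine Finset.sum_congr rfl fun y' _ => ?_
        refine Eq.trans ?_ (congrArg (fun t : ℝ => (q⁻¹) ^ 4 * t ^ 2) (Equiv.sum_comp σ.symm _))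
        have h2 : ∑ x, f x y * f x y' = (q⁻¹) ^ 2 * ∑ x, (if s(σ.symm x, σ.symm y) ∈ S ∧
            s(σ.symm x, σ.symm y') ∈ S then (1 : ℝ) else 0) := by
          rw [Finset.mul_sum]
          refine Finset.sum_congr rfl fun x _ => ?_
          simp only [hf]
          by_cases h3 : s(σ.symm x, σ.symm y) ∈ S <;> by_cases h4 : s(σ.symm x, σ.symm y') ∈ S <;>
            simp [h3, h4, pow_two]
        rw [h2]
        ring_nf
      rw [h1]
      calc (q⁻¹) ^ 4 * fourCount S ≤ (q⁻¹) ^ 4 * (K * q ^ 4 * (n : ℝ) ^ 4) := by gcongr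
        _ = _ := by field_simp)
  refine ⟨X.map σ.symm.toEmbedding, J.map σ.symm.toEmbedding, ?_⟩
  rw [← hrect]
  refine mul_le_mul_of_nonneg_left (le_trans ?_ hX) hq.le
  have hle : (openPairs S σ l (X.map σ.symm.toEmbedding) (J.map σ.symm.toEmbedding)).card
      ≤ Q.card := by
    apply Finset.card_le_card_of_injOn (fun z => (σ z.1, σ z.2))
    · intro z hz
      simp only [openPairs, Finset.coe_filter, Finset.mem_product, Finset.mem_map_equiv,
        Equiv.symm_symm, Set.mem_ofPred_eq] at hz
      by_contra hzQ
      obtain ⟨i₁, i₃, i₄, ht, hy, g1, g2, g3⟩ := hcl _ hz.1.1 _ hz.1.2 hzQ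
      exact hz.2 ⟨i₁, i₃, i₄, ht, hy, hmem _ _ g1, hmem _ _ g2, hmem _ _ g3⟩
    · intro z _ z' _ h
      simp only [Prod.mk.injEq, EmbeddingLike.apply_eq_iff_eq] at h
      exact Prod.ext h.1 h.2
  have : ((openPairs S σ l (X.map σ.symm.toEmbedding) (J.map σ.symm.toEmbedding)).card : ℝ)
      ≤ Q.card := by exact_mod_cast hle
  linarith

set_option maxHeartbeats 1000000 in
/-- In a graph `T` with controlled rectangle counts, edge number and four-cycle count, in which no
small subset `S` predicts a pair set `openPairs S` of too large density in `T`, every subgraph `G'`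
with more than `1/2 + ε` of the edges has `P_δ` for `δ = 1 / N`. -/
lemma satisfiesPdelta_of_good (T : Finset (Sym2 (ZMod n))) (hT : ∀ e ∈ T, ¬ e.IsDiag)
    (p ε τ η K γ ρ θ : ℝ) (L N : ℕ) (hp : 0 < p)
    (hε : 0 < ε) (hε1 : ε ≤ 1 / 4) (hL : 8 / ε ≤ L) (hN : 100 ≤ ε * N) (hK0 : 0 < K)
    (hη : 0 < η) (hη1 : η ≤ 1)
    (hγ : γ = ε / (16 * ((L + 1) ^ 2 * N))) (hρ : ρ = ε ^ 3 * γ ^ 3 / (4096 * (K / η ^ 4)))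
    (hθ : θ = ε ^ 2 * γ / 512) (hηθ : η ≤ θ / 16)
    (hn : 8 * N ≤ n) (hγn : 6 ≤ γ * n) (hεn : 2 ≤ ε * n) (hτ0 : 0 ≤ τ) (hτ1 : τ ≤ θ / 8)
    (hτε : 4 * τ ≤ ε)
    (hτ2 : 32 * τ * N ≤ ε * ρ)
    (hsmall : 2 * (4 ^ n * Real.exp (-(τ ^ 2 / 16 * η * (p * (n : ℝ) ^ 2)))) < 1)
    (g1 : fourCount T ≤ K * p ^ 4 * (n : ℝ) ^ 4)
    (g2 : ∀ A B : Finset (ZMod n),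
      (pairCount T (A ×ˢ B) : ℝ) ≤ p * (A.card * B.card) + τ * (p * (n : ℝ) ^ 2))
    (g3 : p * ((n : ℝ) ^ 2 - n) - τ * (p * (n : ℝ) ^ 2) ≤ pairCount T Finset.univ)
    (g4 : ∀ S ⊆ T, (S.card : ℝ) ≤ η * (p * (n : ℝ) ^ 2) → ∀ (σ : ZMod n ≃ ZMod n) (l : ℕ), l ≤ n →
      ∀ X J : Finset (ZMod n), (pairCountOut T S (openPairs S σ l X J) : ℝ) <
        p * (openPairs S σ l X J).card + θ / 2 * (p * (n : ℝ) ^ 2))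
    (G' : SimpleGraph (ZMod n)) (T' : Finset (Sym2 (ZMod n))) (hG' : ∀ e, e ∈ T' ↔ e ∈ G'.edgeSet)
    (hT' : T' ⊆ T) (hcard : (1 / 2 + 2 * ε) * (T.card : ℝ) < T'.card) :
    SatisfiesPdelta (1 / N) G' := by
  have hn0 : (0 : ℝ) < n := by exact_mod_cast Nat.pos_of_ne_zero (NeZero.ne n)
  have hN0 : (0 : ℝ) < N := by
    by_contra h
    push Not at h
    nlinarith
  have hLpos : (0 : ℝ) < L := lt_of_lt_of_le (by positivity) hL
  have hγ0 : 0 < γ := by rw [hγ]; positivity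
  have hθ0 : 0 < θ := by rw [hθ]; positivity
  have hτ16 : τ ≤ 1 / 16 := by linarith
  set D : ℝ := p * (n : ℝ) ^ 2 with hD
  have hD0 : 0 < D := by positivity
  have hu := pairCount_univ hT
  have hu' := pairCount_univ fun e he => hT e (hT' he)
  have hup : (pairCount T Finset.univ : ℝ) ≤ (1 + τ) * D := by
    have := g2 Finset.univ Finset.univ
    rw [Finset.univ_product_univ, Finset.card_univ, ZMod.card] at this
    rw [hD] at this ⊢
    linarith
  have hup' : (pairCount T' Finset.univ : ℝ) ≤ 2 * D := by
    have : (pairCount T' Finset.univ : ℝ) ≤ pairCount T Finset.univ := by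
      exact_mod_cast pairCount_mono hT' _
    nlinarith
  obtain ⟨S, hS, hsample⟩ := exists_sample hη.le hη1 T' (τ / 8) (2 * D) (τ * (η * D))
    (by positivity) (by linarith) hup' (by
      rw [ZMod.card]
      convert hsmall using 5
      ring)
  set q : ℝ := η * p with hq
  have hq0 : 0 < q := by positivity
  have hqD : η * D = q * (n : ℝ) ^ 2 := by rw [hD, hq]; ring
  have hH : ∀ A B : Finset (ZMod n),
      (pairCount S (A ×ˢ B) : ℝ) ≤ q * (A.card * B.card + 2 * τ * (n : ℝ) ^ 2) := by
    intro A B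
    have h1 := (hsample A B).1
    have h2 : (pairCount T' (A ×ˢ B) : ℝ) ≤ pairCount T (A ×ˢ B) := by
      exact_mod_cast pairCount_mono hT' _
    have h3 : η * pairCount T' (A ×ˢ B) ≤ η * (p * (A.card * B.card) + τ * D) := by
      gcongr
      exact h2.trans (g2 A B)
    calc (pairCount S (A ×ˢ B) : ℝ) ≤ η * (p * (A.card * B.card) + τ * D) + τ * (η * D) := by
          linarith
      _ = _ := by rw [hD, hq]; ring
  have htot : q * ((1 / 2 + ε) * (n : ℝ) ^ 2) ≤ pairCount S Finset.univ := by
    have h1 := (hsample Finset.univ Finset.univ).2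
    rw [Finset.univ_product_univ] at h1
    have h2 : (1 / 2 + 2 * ε) * (pairCount T Finset.univ : ℝ) ≤ pairCount T' Finset.univ := by
      rw [hu, hu']; push_cast; linarith
    have h4 : p * n ≤ ε / 2 * D := by
      rw [hD]
      have : p * n * 2 ≤ p * n * (ε * n) := by gcongr
      nlinarith
    have h5 : (1 - τ - ε / 2) * D ≤ pairCount T Finset.univ := by
      refine le_trans ?_ g3
      rw [hD] at h4 ⊢
      nlinarith
    have h6 : (1 / 2 + 2 * ε) * ((1 - τ - ε / 2) * D) ≤ pairCount T' Finset.univ :=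
      le_trans (mul_le_mul_of_nonneg_left h5 (by positivity)) h2
    have h7 : (1 / 2 + ε + τ) * D ≤ (1 / 2 + 2 * ε) * ((1 - τ - ε / 2) * D) := by
      rw [← mul_assoc (1 / 2 + 2 * ε)]
      refine mul_le_mul_of_nonneg_right ?_ hD0.le
      nlinarith
    have h8 : η * ((1 / 2 + ε + τ) * D) ≤ η * pairCount T' Finset.univ :=
      mul_le_mul_of_nonneg_left (h7.trans h6) hη.le
    have h9 : q * ((1 / 2 + ε) * (n : ℝ) ^ 2) = (1 / 2 + ε) * (η * D) := by rw [hqD]; ring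
    rw [h9]
    linarith
  have hScard : 2 * (S.card : ℝ) ≤ 2 * (η * D) := by
    have h1 := pairCount_univ fun e he => hT e (hT' (hS he))
    have h2 := hH Finset.univ Finset.univ
    rw [Finset.univ_product_univ, h1, Finset.card_univ, ZMod.card] at h2
    push_cast at h2
    rw [hqD]
    have h3 : 0 < q * (n : ℝ) ^ 2 := by positivity
    nlinarith
  have h4K : fourCount S ≤ K / η ^ 4 * q ^ 4 * (n : ℝ) ^ 4 := by
    refine (fourCount_mono (hS.trans hT')).trans (g1.trans (le_of_eq ?_))
    rw [hq]; field_simp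
  intro σ l hl
  by_contra hcon
  have hl' : l ≤ n / N := by
    rw [Nat.le_div_iff_mul_le (by exact_mod_cast hN0)]
    have : (l : ℝ) * N ≤ n := by
      calc (l : ℝ) * N ≤ (1 / N * n) * N := by gcongr
        _ = n := by field_simp
    exact_mod_cast this
  obtain ⟨X, J, hXJ⟩ := exists_excess_graph S σ q ε (2 * τ) (K / η ^ 4) γ ρ L N l hq0 hε
    (by linarith) hL hN (by positivity) hγ hρ hn hγn hl' (by positivity)
    (by rw [← hθ]; linarith) (by linarith) hH htot h4K
  rw [← hθ] at hXJ
  set Q := openPairs S σ l X J with hQ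
  have hTQ : pairCount T' (X ×ˢ J) ≤ pairCount T Q := by
    refine pairCount_le_pairCount fun z hz1 hz2 => ⟨Finset.mem_filter.2 ⟨hz1, fun hc => hcon ?_⟩, hT' hz2⟩
    exact containsShortcut_of_closes (fun e he => (hG' e).1 (hS he)) ((hG' _).1 hz2) hc
  have hTQ' : (pairCount T' (X ×ˢ J) : ℝ) ≤ pairCount T Q := by exact_mod_cast hTQ
  have hout : (pairCount T Q : ℝ) ≤ pairCountOut T S Q + 2 * S.card := by
    have h1 := pairCount_le_out_add T S Q
    have h2 := pairCount_le_two_mul S Q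
    exact_mod_cast h1.trans (by omega)
  have hg := g4 S (hS.trans hT') (by linarith) σ l (hl'.trans (Nat.div_le_self _ _)) X J
  have hs := (hsample X J).1
  have h1 : η * (p * Q.card + (θ - τ) * D) ≤ η * pairCount T' (X ×ˢ J) := by
    have : q * (Q.card + θ * (n : ℝ) ^ 2) = η * (p * Q.card + θ * D) := by rw [hD, hq]; ring
    rw [this] at hXJ
    linarith
  have h2 := le_of_mul_le_mul_left h1 hη
  have h3 : η * D ≤ θ / 16 * D := by gcongr
  have h4 : τ * D ≤ θ / 8 * D := by gcongr
  have h5 : 0 < θ * D := by positivity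
  linarith

end Assembly

/-! ### The random graph as a random edge set -/

/-- The pairs of distinct vertices. -/
noncomputable def allEdges (V : Type*) [Fintype V] : Finset (Sym2 V) :=
  Finset.univ.filter fun e => ¬ e.IsDiag

lemma not_isDiag_of_mem_allEdges {V : Type*} [Fintype V] (e : Sym2 V) (he : e ∈ allEdges V) :
    ¬ e.IsDiag := (Finset.mem_filter.1 he).2

lemma card_allEdges (V : Type*) [Fintype V] :
    (allEdges V).card = (Fintype.card V).choose 2 := by
  rw [← Sym2.card_subtype_not_diag, Fintype.card_subtype]
  rfl

lemma sum_simpleGraph_eq {V : Type*} [Fintype V] [Fintype (SimpleGraph V)] (F : SimpleGraph V → ℝ) :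
    ∑ G : SimpleGraph V, F G =
      ∑ T ∈ (allEdges V).powerset, F (SimpleGraph.fromEdgeSet (T : Set (Sym2 V))) := by
  refine Finset.sum_bij' (fun G _ => Finset.univ.filter fun e => e ∈ G.edgeSet)
    (fun T _ => SimpleGraph.fromEdgeSet (T : Set (Sym2 V))) ?_ ?_ ?_ ?_ ?_
  · intro G _
    rw [Finset.mem_powerset]
    intro e he
    rw [Finset.mem_filter] at he
    exact Finset.mem_filter.2 ⟨Finset.mem_univ _, G.not_isDiag_of_mem_edgeSet he.2⟩
  · intros; exact Finset.mem_univ _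
  · intro G _
    have : ((Finset.univ.filter fun e => e ∈ G.edgeSet : Finset (Sym2 V)) : Set (Sym2 V))
        = G.edgeSet := by ext e; simp
    rw [this, SimpleGraph.fromEdgeSet_edgeSet]
  · intro T hT
    rw [Finset.mem_powerset] at hT
    ext e
    simp only [Finset.mem_filter, SimpleGraph.edgeSet_fromEdgeSet]
    constructor
    · intro h; exact h.2.1
    · intro h; exact ⟨Finset.mem_univ _, h, (Finset.mem_filter.1 (hT h)).2⟩
  · intro G _
    congr 1
    have : ((Finset.univ.filter fun e => e ∈ G.edgeSet : Finset (Sym2 V)) : Set (Sym2 V))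
        = G.edgeSet := by ext e; simp
    rw [this, SimpleGraph.fromEdgeSet_edgeSet]

lemma edgeSet_fromEdgeSet_of_subset {V : Type*} [Fintype V] {T : Finset (Sym2 V)}
    (hT : T ⊆ allEdges V) :
    (SimpleGraph.fromEdgeSet (T : Set (Sym2 V))).edgeSet = (T : Set (Sym2 V)) := by
  rw [SimpleGraph.edgeSet_fromEdgeSet]
  ext e
  constructor
  · intro h; exact h.1
  · intro h; exact ⟨h, (Finset.mem_filter.1 (hT h)).2⟩

lemma bernWeight_eq {α : Type*} (p : ℝ) {E T : Finset α} (hT : T ⊆ E) :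
    bernWeight p E T = p ^ T.card * (1 - p) ^ (E.card - T.card) := by
  unfold bernWeight
  rw [Finset.card_sdiff_of_subset hT]

lemma gnpProbZMod_eq (n : ℕ) [NeZero n] (p : ℝ) (P : SimpleGraph (ZMod n) → Prop) :
    gnpProbZMod n p P =
      bernProb p (allEdges (ZMod n)) fun T => P (SimpleGraph.fromEdgeSet (T : Set _)) := by
  unfold gnpProbZMod bernProb
  rw [dif_neg (NeZero.ne n), Finset.sum_filter]
  refine (sum_simpleGraph_eq _).trans ?_
  refine Finset.sum_congr rfl fun T hT => ?_
  rw [Finset.mem_powerset] at hT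
  rw [edgeSet_fromEdgeSet_of_subset hT, Set.ncard_coe_finset]
  rw [bernWeight_eq p hT, card_allEdges, ZMod.card]

lemma pairCount_allEdges_univ (n : ℕ) [NeZero n] :
    (pairCount (allEdges (ZMod n)) Finset.univ : ℝ) = (n : ℝ) ^ 2 - n := by
  rw [pairCount_univ not_isDiag_of_mem_allEdges, card_allEdges, ZMod.card]
  push_cast
  rw [Nat.cast_choose_two]
  ring

/-- The random edge set violates one of the hypotheses `g1`, …, `g4` of `satisfiesPdelta_of_good`
with small probability. -/
lemma bernProb_not_good_le (n : ℕ) [NeZero n] (p τ η K θ : ℝ) (hp : 0 < p) (hp1 : p ≤ 1)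
    (hnp : 1 ≤ (n : ℝ) * p ^ 2) (hK : 0 < K) (hη : 0 < η) (hη1 : η ≤ 1)
    (hτ0 : 0 ≤ τ) (hτ1 : τ ≤ 1) (hθ0 : 0 ≤ θ) (hθ1 : θ ≤ 1)
    (hηθ : η * Real.log (1 / η) + η ≤ θ ^ 2 / 64) :
    bernProb p (allEdges (ZMod n)) (fun T => ¬ (fourCount T ≤ K * p ^ 4 * (n : ℝ) ^ 4 ∧
      (∀ A B : Finset (ZMod n),
        (pairCount T (A ×ˢ B) : ℝ) ≤ p * (A.card * B.card) + τ * (p * (n : ℝ) ^ 2)) ∧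
      p * ((n : ℝ) ^ 2 - n) - τ * (p * (n : ℝ) ^ 2) ≤ pairCount T Finset.univ ∧
      ∀ S ⊆ T, (S.card : ℝ) ≤ η * (p * (n : ℝ) ^ 2) → ∀ (σ : ZMod n ≃ ZMod n) (l : ℕ), l ≤ n →
        ∀ X J : Finset (ZMod n), (pairCountOut T S (openPairs S σ l X J) : ℝ) <
          p * (openPairs S σ l X J).card + θ / 2 * (p * (n : ℝ) ^ 2)))
    ≤ 4 / K + (4 ^ n * Real.exp (-(τ ^ 2 / 8 * (p * (n : ℝ) ^ 2))) +
      (Real.exp (-(τ ^ 2 / 8 * (p * (n : ℝ) ^ 2))) +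
      n.factorial * (n + 1) * 4 ^ n * Real.exp (-(θ ^ 2 / 64 * (p * (n : ℝ) ^ 2))))) := by
  set D : ℝ := p * (n : ℝ) ^ 2 with hD
  have hD0 : 0 ≤ D := by positivity
  set E := allEdges (ZMod n) with hE
  have hEd : ∀ e ∈ E, ¬ e.IsDiag := not_isDiag_of_mem_allEdges
  have hu := pairCount_allEdges_univ n
  rw [← hE] at hu
  have hn0 : (0 : ℝ) ≤ n := Nat.cast_nonneg n
  have hM : (pairCount E Finset.univ : ℝ) ≤ (n : ℝ) ^ 2 := by rw [hu]; linarith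
  have b1 := bernProb_fourCount_le hp hp1 hEd hK (by rw [ZMod.card]; exact hnp)
  have b2 := bernProb_exists_rect_upper hp.le hp1 E (τ / 4) ((n : ℝ) ^ 2) (τ * D)
    (by positivity) (by linarith) hM
  have b3 := bernProb_pairCount_lower hp.le hp1 E Finset.univ (τ / 4) ((n : ℝ) ^ 2) (τ * D)
    (by positivity) (by linarith) hM
  have b4 := bernProb_exists_sample_le hp.le hp1 hη hη1 E
    ((Finset.univ : Finset (ZMod n ≃ ZMod n)) ×ˢ (Finset.range (n + 1)) ×ˢ
      (Finset.univ : Finset (Finset (ZMod n))) ×ˢ (Finset.univ : Finset (Finset (ZMod n))))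
    (fun S i => openPairs S i.1 i.2.1 i.2.2.1 i.2.2.2) (η * D) (θ / 8) ((n : ℝ) ^ 2) (θ / 2 * D)
    (by positivity) (by linarith) (by rw [ZMod.card])
  have e2 : 2 * (τ / 4) ^ 2 * p * (n : ℝ) ^ 2 - τ / 4 * (τ * D) = -(τ ^ 2 / 8 * D) := by
    rw [hD]; ring
  rw [e2] at b2 b3
  rw [ZMod.card] at b1 b2
  have hEc : (E.card : ℝ) ≤ (n : ℝ) ^ 2 := by
    have h1 : (pairCount E Finset.univ : ℝ) = 2 * E.card := by
      rw [pairCount_univ hEd]; push_cast; ring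
    have h2 : (0 : ℝ) ≤ E.card := Nat.cast_nonneg _
    linarith
  have e4 : η * D * Real.log (1 / η) + η * p * E.card +
      (2 * (θ / 8) ^ 2 * p * (n : ℝ) ^ 2 - θ / 8 * (θ / 2 * D)) ≤ -(θ ^ 2 / 64 * D) := by
    have h1 : η * p * E.card ≤ η * p * (n : ℝ) ^ 2 := by gcongr
    have h2 : (η * Real.log (1 / η) + η) * D ≤ θ ^ 2 / 64 * D := by gcongr
    have h3 : 2 * (θ / 8) ^ 2 * p * (n : ℝ) ^ 2 - θ / 8 * (θ / 2 * D) = -(θ ^ 2 / 32 * D) := by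
      rw [hD]; ring
    have h4 : η * p * (n : ℝ) ^ 2 = η * D := by rw [hD]; ring
    rw [h3]
    linarith
  have c4 := b4.trans (mul_le_mul_of_nonneg_left (Real.exp_le_exp.2 e4) (Nat.cast_nonneg _))
  have hI : (((Finset.univ : Finset (ZMod n ≃ ZMod n)) ×ˢ (Finset.range (n + 1)) ×ˢ
      (Finset.univ : Finset (Finset (ZMod n))) ×ˢ
      (Finset.univ : Finset (Finset (ZMod n)))).card : ℝ) = n.factorial * (n + 1) * 4 ^ n := by
    rw [Finset.card_product, Finset.card_product, Finset.card_product, Finset.card_range,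
      Finset.card_univ, Finset.card_univ, Fintype.card_finset, ZMod.card, Fintype.card_equiv
      (Equiv.refl _), ZMod.card, ← mul_pow]
    push_cast
    ring
  rw [hI] at c4
  refine le_trans ?_ (add_le_add b1 (add_le_add b2 (add_le_add b3 c4)))
  refine le_trans ?_ (add_le_add_right ((bernProb_or hp.le hp1 E _ _).trans
    (add_le_add_right (bernProb_or hp.le hp1 E _ _) _)) _)
  refine le_trans ?_ (bernProb_or hp.le hp1 E _ _)
  refine bernProb_mono hp.le hp1 E ?_
  intro T _ hbad
  by_contra hcon
  simp only [not_or] at hcon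
  obtain ⟨h1, h2, h3, h4⟩ := hcon
  refine hbad ⟨(not_le.1 h1).le, ?_, ?_, ?_⟩
  · intro A B
    by_contra hc
    refine h2 ⟨A, B, ?_⟩
    have h5 : (pairCount E (A ×ˢ B) : ℝ) ≤ A.card * B.card := by
      have := pairCount_le_card E (A ×ˢ B)
      rw [Finset.card_product] at this
      exact_mod_cast this
    have h6 : p * (pairCount E (A ×ˢ B) : ℝ) ≤ p * (A.card * B.card) := by gcongr
    linarith [not_le.1 hc]
  · rw [hu] at h3
    exact (not_le.1 h3).le
  · intro S hS hSc σ l hl X J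
    by_contra hc
    refine h4 ⟨S, hS, hSc, (σ, l, X, J), ?_, not_lt.1 hc⟩
    simp only [Finset.mem_product, Finset.mem_univ, Finset.mem_range, true_and, and_true]
    omega


/-! ### Asymptotics -/

/-- The number of labelings, lengths and pairs of vertex sets is negligible against
`exp (-c n ^ (3/2))`. -/
lemma tendsto_entropy {c : ℝ} (hc : 0 < c) :
    Tendsto (fun n : ℕ => (n.factorial * (n + 1) * 4 ^ n * Real.exp (-(c * (n * √n))) : ℝ))
      atTop (𝓝 0) := by
  have hlog : ∀ᶠ x : ℝ in atTop, Real.log x + 4 ≤ c * √x := by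
    have h1 := (isLittleO_log_rpow_atTop (r := 1 / 2) (by norm_num)).bound (half_pos hc)
    have h2 := (tendsto_rpow_atTop (y := 1 / 2) (by norm_num)).eventually_ge_atTop (8 / c)
    filter_upwards [h1, h2] with x h1 h2
    rw [Real.sqrt_eq_rpow]
    have h3 : 0 ≤ x ^ (1 / 2 : ℝ) := le_trans (by positivity) h2
    rw [Real.norm_eq_abs, Real.norm_of_nonneg h3] at h1
    rw [div_le_iff₀ hc] at h2
    linarith [le_abs_self (Real.log x)]
  have hlog' := tendsto_natCast_atTop_atTop.eventually hlog
  have hexp : Tendsto (fun n : ℕ => Real.exp (-(n : ℝ))) atTop (𝓝 0) :=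
    Real.tendsto_exp_neg_atTop_nhds_zero.comp tendsto_natCast_atTop_atTop
  refine squeeze_zero' (Eventually.of_forall fun n => by positivity) ?_ hexp
  filter_upwards [hlog', eventually_ge_atTop 1] with n hn hn1
  have hn0 : (0 : ℝ) < n := by exact_mod_cast hn1
  have a1 : (n.factorial : ℝ) ≤ Real.exp (n * Real.log n) := by
    rw [mul_comm, Real.exp_mul, Real.exp_log hn0, Real.rpow_natCast]
    exact_mod_cast Nat.factorial_le_pow n
  have a2 : ((n : ℝ) + 1) ≤ Real.exp n := Real.add_one_le_exp _
  have a3 : (4 : ℝ) ^ n ≤ Real.exp (2 * n) := by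
    rw [Real.exp_mul, Real.rpow_natCast]
    refine pow_le_pow_left₀ (by norm_num) ?_ n
    have h1 : (2 : ℝ) ≤ Real.exp 1 := by linarith [Real.add_one_le_exp (1 : ℝ)]
    calc (4 : ℝ) = 2 * 2 := by norm_num
      _ ≤ Real.exp 1 * Real.exp 1 := by gcongr
      _ = Real.exp 2 := by rw [← Real.exp_add]; norm_num
  calc (n.factorial * (n + 1) * 4 ^ n * Real.exp (-(c * (n * √n))) : ℝ)
      ≤ Real.exp (n * Real.log n) * Real.exp n * Real.exp (2 * n) *
          Real.exp (-(c * (n * √n))) := by gcongr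
    _ = Real.exp (n * (Real.log n + 3 - c * √n)) := by
        rw [← Real.exp_add, ← Real.exp_add, ← Real.exp_add]; ring_nf
    _ ≤ Real.exp (n * (-1)) := by
        apply Real.exp_le_exp.2
        apply mul_le_mul_of_nonneg_left _ hn0.le
        linarith
    _ = _ := by rw [mul_neg_one]

/-- The sample rate `η`, of order `θ ^ 4`, has entropy below `θ ^ 2 / 64`. -/
lemma exists_rate {θ : ℝ} (h0 : 0 < θ) (h1 : θ ≤ 1) :
    ∃ η : ℝ, 0 < η ∧ η ≤ 1 ∧ η ≤ θ / 16 ∧ η * Real.log (1 / η) + η ≤ θ ^ 2 / 64 := by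
  obtain ⟨x, hx⟩ : ∃ x : ℝ, x = θ ^ 2 / 256 := ⟨_, rfl⟩
  have hx0 : 0 < x := by rw [hx]; positivity
  have hθ2 : θ ^ 2 ≤ θ := by nlinarith
  have hx1 : x ≤ 1 := by linarith
  have hxx : x ^ 2 ≤ x := by nlinarith
  refine ⟨x ^ 2, by positivity, by linarith, by linarith, ?_⟩
  have h2 : Real.log (1 / x ^ 2) = 2 * Real.log (1 / x) := by
    rw [← one_div_pow, Real.log_pow]; norm_num
  have h3 : Real.log (1 / x) ≤ 1 / x - 1 := Real.log_le_sub_one_of_pos (by positivity)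
  have h4 : x ^ 2 * (2 * Real.log (1 / x)) ≤ x ^ 2 * (2 * (1 / x - 1)) := by gcongr
  have h5 : x ^ 2 * (2 * (1 / x - 1)) = 2 * x - 2 * x ^ 2 := by field_simp
  rw [h2]
  nlinarith

lemma edge_probability_bounds {n : ℕ} (hn : 1 ≤ n) {p : ℝ}
    (h1 : 1 * (n : ℝ) ^ (-(1 / 2) : ℝ) ≤ p) (h2 : p ≤ (n : ℝ) ^ (-(1 / 3) : ℝ)) :
    0 < p ∧ p ≤ 1 ∧ 1 ≤ (n : ℝ) * p ^ 2 ∧ (n : ℝ) * √n ≤ p * (n : ℝ) ^ 2 := by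
  have hn0 : (0 : ℝ) < n := by exact_mod_cast hn
  have hn1 : (1 : ℝ) ≤ n := by exact_mod_cast hn
  rw [one_mul, Real.rpow_neg hn0.le, ← Real.sqrt_eq_rpow] at h1
  have hs : 0 < √(n : ℝ) := Real.sqrt_pos.2 hn0
  have hp : 0 < p := lt_of_lt_of_le (by positivity) h1
  have hss : √(n : ℝ) * √n = n := Real.mul_self_sqrt hn0.le
  have h3 : 1 ≤ p * √n := by
    rw [inv_eq_one_div, div_le_iff₀ hs] at h1
    exact h1
  refine ⟨hp, h2.trans (Real.rpow_le_one_of_one_le_of_nonpos hn1 (by norm_num)), ?_, ?_⟩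
  · calc (1 : ℝ) ≤ (p * √n) ^ 2 := one_le_pow₀ h3
      _ = n * p ^ 2 := by rw [mul_pow, pow_two √(n : ℝ), hss]; ring
  · calc (n : ℝ) * √n = n * √n * 1 := by ring
      _ ≤ n * √n * (p * √n) := by gcongr
      _ = p * n * (√n * √n) := by ring
      _ = p * (n : ℝ) ^ 2 := by rw [hss]; ring

/-- For every ε > 0 there are δ, C > 0 such that if C·n^(-1/2) ≤ p(n) ≤ n^(-1/3), then
a.a.s. every subgraph G' of G(n,p) with more than (1/2 + ε)·e(G(n,p)) edges satisfies P_δ. -/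
theorem aas_Pdelta (ε : ℝ) (hε : 0 < ε) :
    ∃ δ C : ℝ, 0 < δ ∧ 0 < C ∧ ∀ p : ℕ → ℝ,
      (∀ n : ℕ, C * (n : ℝ) ^ (-(1/2) : ℝ) ≤ p n ∧ p n ≤ (n : ℝ) ^ (-(1/3) : ℝ)) →
      Filter.Tendsto
        (fun n : ℕ => gnpProbZMod n (p n) (fun G =>
          ∀ G' : SimpleGraph (ZMod n), G' ≤ G →
            (1/2 + ε) * (G.edgeSet.ncard : ℝ) < (G'.edgeSet.ncard : ℝ) →
            SatisfiesPdelta δ G'))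
        Filter.atTop (nhds 1) := by
  obtain ⟨e, he⟩ : ∃ e : ℝ, e = min ε (1 / 2) / 2 := ⟨_, rfl⟩
  have he0 : 0 < e := by rw [he]; positivity
  have he1 : e ≤ 1 / 4 := by rw [he]; linarith [min_le_right ε (1 / 2)]
  have he2 : 2 * e ≤ ε := by rw [he]; linarith [min_le_left ε (1 / 2)]
  obtain ⟨N, hN⟩ := exists_nat_ge (100 / e)
  obtain ⟨L, hL⟩ := exists_nat_ge (8 / e)
  have hN' : 100 ≤ e * N := by rw [div_le_iff₀ he0] at hN; linarith
  have hN1 : (1 : ℝ) ≤ N := by nlinarith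
  have hN0 : (0 : ℝ) < N := by linarith
  obtain ⟨γ, hγ⟩ : ∃ γ : ℝ, γ = e / (16 * ((L + 1) ^ 2 * N)) := ⟨_, rfl⟩
  have hγ0 : 0 < γ := by rw [hγ]; positivity
  have hγ1 : γ ≤ 1 := by
    rw [hγ, div_le_one (by positivity)]
    have h1 : (1 : ℝ) ≤ (L + 1) ^ 2 := one_le_pow₀ (by linarith [Nat.cast_nonneg (α := ℝ) L])
    nlinarith
  obtain ⟨θ, hθ⟩ : ∃ θ : ℝ, θ = e ^ 2 * γ / 512 := ⟨_, rfl⟩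
  have hθ0 : 0 < θ := by rw [hθ]; positivity
  have hθ1 : θ ≤ 1 := by
    rw [hθ]
    have : e ^ 2 * γ ≤ 1 * 1 := by gcongr; nlinarith
    linarith
  obtain ⟨η, hη0, hη1, hηθ, hηlog⟩ := exists_rate hθ0 hθ1
  refine ⟨1 / N, 1, by positivity, one_pos, fun p hp => ?_⟩
  rw [Metric.tendsto_atTop']
  intro κ hκ
  obtain ⟨K, hK⟩ : ∃ K : ℝ, K = 8 / κ := ⟨_, rfl⟩
  have hK0 : 0 < K := by rw [hK]; positivity
  obtain ⟨ρ, hρ⟩ : ∃ ρ : ℝ, ρ = e ^ 3 * γ ^ 3 / (4096 * (K / η ^ 4)) := ⟨_, rfl⟩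
  have hρ0 : 0 < ρ := by rw [hρ]; positivity
  obtain ⟨τ, hτ⟩ : ∃ τ : ℝ, τ = min (θ / 8) (min (e / 4) (e * ρ / (32 * N))) := ⟨_, rfl⟩
  have hτ0 : 0 < τ := by rw [hτ]; positivity
  have hτ1 : τ ≤ θ / 8 := hτ ▸ min_le_left _ _
  have hτ2 : 4 * τ ≤ e := by
    have : τ ≤ e / 4 := hτ ▸ (min_le_right _ _).trans (min_le_left _ _)
    linarith
  have hτ3 : 32 * τ * N ≤ e * ρ := by
    have : τ ≤ e * ρ / (32 * N) := hτ ▸ (min_le_right _ _).trans (min_le_right _ _)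
    rw [le_div_iff₀ (by positivity)] at this
    linarith
  -- A single exponential rate serving all the error terms.
  obtain ⟨c, hc⟩ : ∃ c : ℝ, c = min (τ ^ 2 / 16 * η) (θ ^ 2 / 64) := ⟨_, rfl⟩
  have hc0 : 0 < c := by rw [hc]; positivity
  have hc1 : c ≤ τ ^ 2 / 16 * η := hc ▸ min_le_left _ _
  have hc2 : c ≤ θ ^ 2 / 64 := hc ▸ min_le_right _ _
  have hc3 : c ≤ τ ^ 2 / 8 := by
    have : τ ^ 2 / 16 * η ≤ τ ^ 2 / 16 * 1 := by gcongr
    nlinarith [sq_nonneg τ]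
  have hev := (tendsto_entropy hc0).eventually_lt_const (lt_min (show (0 : ℝ) < 1 / 2 by norm_num)
    (show 0 < κ / 8 by positivity))
  have hnat : Tendsto (fun n : ℕ => (n : ℝ)) atTop atTop := tendsto_natCast_atTop_atTop
  obtain ⟨n₀, hn₀⟩ := eventually_atTop.1 (hev.and ((eventually_ge_atTop 1).and
    ((eventually_ge_atTop (8 * N)).and ((hnat.eventually_ge_atTop (6 / γ)).and
      (hnat.eventually_ge_atTop (2 / e))))))
  refine ⟨n₀, fun n hn => ?_⟩
  obtain ⟨hF, hn1, hn8, hnγ, hne⟩ := hn₀ n hn.le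
  rw [lt_min_iff] at hF
  have : NeZero n := ⟨by omega⟩
  obtain ⟨hp0, hp1, hnp, hD⟩ := edge_probability_bounds hn1 (hp n).1 (hp n).2
  rw [div_le_iff₀ hγ0] at hnγ
  rw [div_le_iff₀ he0] at hne
  have hfac : (1 : ℝ) ≤ n.factorial * (n + 1) := by
    have h1 : (1 : ℝ) ≤ n.factorial := by exact_mod_cast Nat.factorial_pos n
    have h2 : (0 : ℝ) ≤ n := Nat.cast_nonneg n
    nlinarith
  have hbound : ∀ a : ℝ, c ≤ a → ∀ M : ℝ, 0 ≤ M → M ≤ n.factorial * (n + 1) * 4 ^ n →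
      M * Real.exp (-(a * (p n * (n : ℝ) ^ 2))) ≤
        n.factorial * (n + 1) * 4 ^ n * Real.exp (-(c * (n * √n))) := by
    intro a ha M hM0 hM
    have : c * (n * √n) ≤ a * (p n * (n : ℝ) ^ 2) :=
      mul_le_mul ha hD (by positivity) (hc0.le.trans ha)
    gcongr
  have h4 : (4 : ℝ) ^ n ≤ n.factorial * (n + 1) * 4 ^ n :=
    le_mul_of_one_le_left (by positivity) hfac
  have h1n : (1 : ℝ) ≤ n.factorial * (n + 1) * 4 ^ n :=
    (one_le_pow₀ (by norm_num)).trans h4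
  have hbad := bernProb_not_good_le n (p n) τ η K θ hp0 hp1 hnp hK0 hη0 hη1 hτ0.le (by linarith)
    hθ0.le hθ1 hηlog
  have b2 := hbound (τ ^ 2 / 8) hc3 (4 ^ n) (by positivity) h4
  have b3 := hbound (τ ^ 2 / 8) hc3 1 zero_le_one h1n
  have b4 := hbound (θ ^ 2 / 64) hc2 _ (by positivity) le_rfl
  have b5 := hbound (τ ^ 2 / 16 * η) hc1 (4 ^ n) (by positivity) h4
  have hK4 : 4 / K = κ / 2 := by rw [hK]; field_simp; norm_num
  rw [gnpProbZMod_eq, bernProb_compl, Real.dist_eq, sub_sub_cancel_left, abs_neg,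
    abs_of_nonneg (bernProb_nonneg hp0.le hp1 _ _)]
  refine lt_of_le_of_lt ((bernProb_mono hp0.le hp1 _ ?_).trans hbad) (by linarith [hF.2])
  intro T hT hnot hgood
  obtain ⟨g1, g2, g3, g4⟩ := hgood
  refine hnot fun G' hG' hcard => ?_
  rw [edgeSet_fromEdgeSet_of_subset hT, Set.ncard_coe_finset] at hcard
  have hmem : ∀ x, x ∈ G'.edgeSet.toFinset ↔ x ∈ G'.edgeSet := fun x => Set.mem_toFinset
  rw [Set.ncard_eq_toFinset_card'] at hcard
  refine satisfiesPdelta_of_good T (fun x hx => not_isDiag_of_mem_allEdges x (hT hx)) (p n) e τ η K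
    γ ρ θ L N hp0 he0 he1 hL hN' hK0 hη0 hη1 hγ hρ hθ hηθ hn8 (by linarith) (by linarith) hτ0.le
    hτ1 hτ2 hτ3 (by linarith [hF.1]) g1 g2 g3 g4 G' G'.edgeSet.toFinset hmem ?_ ?_
  · intro x hx
    have h1 := SimpleGraph.edgeSet_mono hG' ((hmem x).1 hx)
    rw [edgeSet_fromEdgeSet_of_subset hT] at h1
    exact h1
  · refine lt_of_le_of_lt ?_ hcard
    gcongr
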